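/- Suppose (Y, d, H^h) satisfies property (H∞). Then there exists an uncountable family of pairwise disjoint compact subsets of Y, each of positive H^h-measure. -/

import Mathlib

open MeasureTheory Set Filter Topology
open scoped NNReal ENNReal

universe u v

/-- A Hausdorff (gauge) function `h : [0,∞) → [0,∞]`: nondecreasing, right-continuous,
and positive on positive arguments. -/
structure IsHausdorffFunction (h : ℝ≥0 → ℝ≥0∞) : Prop where
  mono : Monotone h
  right_continuous : ∀ t : ℝ≥0, ContinuousWithinAt h (Set.Ici t) t
  pos : ∀ t : ℝ≥0, 0 < t → 0 < h t

/-- `h` is of finite order: `limsup_{t→0+} h(3t)/h(t) < ∞`. -/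
def FiniteOrder (h : ℝ≥0 → ℝ≥0∞) : Prop :=
  Filter.limsup (fun t : ℝ≥0 => h (3 * t) / h t) (nhdsWithin 0 (Set.Ioi 0)) < ⊤

/-- The Hausdorff (outer) measure built from the gauge `h`:
`H^h(E) = sup_{δ>0} inf { Σ h(diam Uᵢ) : E ⊆ ⋃ Uᵢ, diam Uᵢ ≤ δ }`. -/
noncomputable def hausdorffM {Z : Type*} [EMetricSpace Z] (h : ℝ≥0 → ℝ≥0∞) :
    MeasureTheory.OuterMeasure Z :=
  MeasureTheory.OuterMeasure.mkMetric (fun d => h d.toNNReal)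

/-- A set `S` is σ-finite with respect to an outer measure `μ` if it is a countable union
of Carathéodory-measurable sets of finite measure. -/
def SigmaFiniteSet {Z : Type*} (μ : MeasureTheory.OuterMeasure Z) (S : Set Z) : Prop :=
  ∃ A : ℕ → Set Z, (∀ n, μ.IsCaratheodory (A n) ∧ μ (A n) < ⊤) ∧ S = ⋃ n, A n

/-- A metric space has finite structural dimension if for every `ξ > 0` there are `N` and
`δ₀ > 0` such that every set of diameter `δ ≤ δ₀` can be covered by `N` sets of diameter
at most `ξ·δ`. -/
def FiniteStructuralDim (Z : Type*) [EMetricSpace Z] : Prop :=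
  ∀ ξ : ℝ≥0, 0 < ξ → ∃ (N : ℕ) (δ₀ : ℝ≥0), 0 < δ₀ ∧
    ∀ s : Set Z, EMetric.diam s ≤ δ₀ →
      ∃ U : Fin N → Set Z, s ⊆ ⋃ i, U i ∧ ∀ i, EMetric.diam (U i) ≤ ξ * EMetric.diam s

/-- Property (H) for a subspace `Y` of the complete separable metric space `Z`. -/
structure PropertyH {Z : Type*} [MetricSpace Z] (Y : Set Z) (h : ℝ≥0 → ℝ≥0∞) : Prop where
  complete : CompleteSpace Z
  separable : TopologicalSpace.SeparableSpace Z
  analytic : MeasureTheory.AnalyticSet Y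
  hausdorff : IsHausdorffFunction h
  cont : Continuous h
  zero : h 0 = 0
  alt : FiniteOrder h ∨ FiniteStructuralDim Z ∨ ∀ x y z : Z, dist x z ≤ max (dist x y) (dist y z)

/-- Property (H∞): property (H) together with non-σ-finiteness of `Y` w.r.t. `H^h`. -/
def PropertyHInf {Z : Type*} [MetricSpace Z] (Y : Set Z) (h : ℝ≥0 → ℝ≥0∞) : Prop :=
  PropertyH Y h ∧ ¬ SigmaFiniteSet (hausdorffM h) Y

/-- Property (Aκ): `X` is a union of κ-many measurable sets of finite measure, and
κ-many null sets always union to a null set. -/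
def PropertyA {X : Type u} (μ : MeasureTheory.OuterMeasure X) (κ : Cardinal.{u}) : Prop :=
  (∃ (ι : Type u) (A : ι → Set X), Cardinal.mk ι = κ ∧ (⋃ i, A i) = Set.univ ∧
      ∀ i, μ.IsCaratheodory (A i) ∧ μ (A i) < ⊤) ∧
  ∀ (ι : Type u) (A : ι → Set X), Cardinal.mk ι = κ → (∀ i, μ (A i) = 0) → μ (⋃ i, A i) = 0

/-- A set is perfect if it is closed and every open set meeting it meets it in an
infinite set. -/
def PerfectSet {X : Type*} [TopologicalSpace X] (C : Set X) : Prop :=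
  IsClosed C ∧ ∀ O : Set X, IsOpen O → (O ∩ C).Nonempty → (O ∩ C).Infinite

/-- The gauge `d ↦ d^s`. -/
noncomputable def sGauge (s : ℝ≥0) : ℝ≥0 → ℝ≥0∞ := fun d => (d : ℝ≥0∞) ^ (s : ℝ)

/-- Hausdorff–Besicovitch dimension: the supremum of all `s ≥ 0` with `H^{d^s}(E) > 0`. -/
noncomputable def hDim {Z : Type*} [EMetricSpace Z] (E : Set Z) : ℝ≥0∞ :=
  ⨆ (s : ℝ≥0) (_ : 0 < hausdorffM (sGauge s) E), (s : ℝ≥0∞)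

/-!
An enlargement inequality for the premeasure `h (diam U)` makes the contents built from it
continuous along increasing sequences, so by capacitability every analytic set of positive `H^h`
measure contains a compact set of positive measure. Weighted covers and a Hahn–Banach argument give
each such compact set `K` a Frostman measure `ν`, that is `ν A ≤ h (diam A)` for small `A`.

The upper density of `ν` decides between two cases. If it is positive on a set of positive
`ν`-measure, that set contains a compact set of positive finite `H^h` measure. Otherwise `K` carries
a nonzero measure `l` with `l A = o(h (diam A))`, and then every compact set of positive `l`-measure
contains an `l`-null compact set of positive `H^h` measure: discard half of it repeatedly, along
partitions so fine that `2 ^ k • l` on the `k`-th remainder stays below a multiple `D < 2` of the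
gauge.

Suppose first that no countable disjoint family of compact sets of positive finite measure is
maximal: Zorn's lemma then gives an uncountable one. Otherwise remove such a maximal family from
`Y`; the rest has positive measure, as `Y` is not `σ`-finite, so it contains a compact set for which
only the second case is left. Countably many `l`-null sets never exhaust `l`, and Zorn's lemma again
gives an uncountable family.
-/

namespace Howroyd

/-- A continuous Hausdorff function vanishing at `0`, as in property (H). -/
structure IsGauge (h : ℝ≥0 → ℝ≥0∞) : Prop extends IsHausdorffFunction h where
  continuous : Continuous h
  map_zero : h 0 = 0

/-- The value `h (diam U)` of the gauge on a set; sets of infinite diameter get `h 0`. -/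
noncomputable def gaugeDiam {Z : Type*} [EMetricSpace Z] (h : ℝ≥0 → ℝ≥0∞) (U : Set Z) : ℝ≥0∞ :=
  h (Metric.ediam U).toNNReal

/-- The Hausdorff content `H^h_δ`, computed with covers by sets of diameter at most `δ`. -/
noncomputable def content {Z : Type*} [EMetricSpace Z] (h : ℝ≥0 → ℝ≥0∞) (δ : ℝ≥0∞) :
    OuterMeasure Z :=
  OuterMeasure.mkMetric'.pre (gaugeDiam h) δ

section Content

variable {Z : Type*} [EMetricSpace Z] {h : ℝ≥0 → ℝ≥0∞}

theorem IsGauge.gaugeDiam_empty (hg : IsGauge h) : gaugeDiam h (∅ : Set Z) = 0 := by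
  simp [gaugeDiam, hg.map_zero]

theorem IsGauge.gaugeDiam_le_of_ediam_le (hg : IsGauge h) {U : Set Z} {d : ℝ≥0}
    (hU : Metric.ediam U ≤ d) : gaugeDiam h U ≤ h d :=
  hg.mono (by simpa using ENNReal.toNNReal_mono ENNReal.coe_ne_top hU)

theorem content_anti {δ δ' : ℝ≥0∞} (hδ : δ ≤ δ') (A : Set Z) :
    content h δ' A ≤ content h δ A :=
  OuterMeasure.mkMetric'.mono_pre (gaugeDiam h) hδ A

theorem content_le_gaugeDiam {δ : ℝ≥0∞} {A : Set Z} (hA : Metric.ediam A ≤ δ) :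
    content h δ A ≤ gaugeDiam h A :=
  OuterMeasure.mkMetric'.pre_le hA

theorem content_le_tsum {ι : Type*} [Countable ι] {δ : ℝ≥0∞} {A : Set Z} {U : ι → Set Z}
    (hA : A ⊆ ⋃ i, U i) (hU : ∀ i, Metric.ediam (U i) ≤ δ) :
    content h δ A ≤ ∑' i, gaugeDiam h (U i) :=
  calc content h δ A ≤ content h δ (⋃ i, U i) := measure_mono hA
    _ ≤ ∑' i, content h δ (U i) := measure_iUnion_le U
    _ ≤ ∑' i, gaugeDiam h (U i) := ENNReal.tsum_le_tsum fun i => content_le_gaugeDiam (hU i)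

theorem hausdorffM_eq_iSup_content (A : Set Z) :
    hausdorffM h A = ⨆ (r : ℝ≥0∞) (_ : 0 < r), content h r A := by
  simp only [hausdorffM, OuterMeasure.mkMetric, OuterMeasure.mkMetric', OuterMeasure.iSup_apply]
  rfl

theorem content_le_hausdorffM {δ : ℝ≥0∞} (hδ : 0 < δ) (A : Set Z) :
    content h δ A ≤ hausdorffM h A := by
  rw [hausdorffM_eq_iSup_content]
  exact le_iSup₂_of_le δ hδ le_rfl

theorem hausdorffM_le_of_content_le {A : Set Z} {w : ℝ≥0∞} {δ : ℕ → ℝ≥0∞}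
    (hδ : Tendsto δ atTop (𝓝 0)) (hw : ∀ n, content h (δ n) A ≤ w) : hausdorffM h A ≤ w := by
  rw [hausdorffM_eq_iSup_content]
  refine iSup₂_le fun r hr => ?_
  obtain ⟨n, hn⟩ := (hδ.eventually (gt_mem_nhds hr)).exists
  exact (content_anti hn.le A).trans (hw n)

theorem IsGauge.exists_cover_of_content_lt (hg : IsGauge h) {δ w : ℝ≥0∞} {A : Set Z}
    (hA : content h δ A < w) :
    ∃ U : ℕ → Set Z, A ⊆ (⋃ i, U i) ∧ (∀ i, Metric.ediam (U i) ≤ δ) ∧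
      ∑' i, gaugeDiam h (U i) < w := by
  rw [content, OuterMeasure.mkMetric'.pre, OuterMeasure.boundedBy_apply] at hA
  simp only [iInf_lt_iff] at hA
  obtain ⟨U, hAU, hsum⟩ := hA
  have hU : ∀ i, Metric.ediam (U i) ≤ δ := by
    intro i
    by_contra hi
    have hne : (U i).Nonempty := nonempty_iff_ne_empty.2 fun h0 => hi (by simp [h0])
    have htop : ⨆ _ : (U i).Nonempty, extend (fun s (_ : Metric.ediam s ≤ δ) => gaugeDiam h s) (U i)
        = ⊤ := by simp [hne, extend, hi]
    exact ENNReal.ne_top_of_tsum_ne_top hsum.ne_top i htop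
  refine ⟨U, hAU, hU, lt_of_le_of_lt (ENNReal.tsum_le_tsum fun i => ?_) hsum⟩
  rcases (U i).eq_empty_or_nonempty with h0 | h0
  · simp [h0, hg.gaugeDiam_empty]
  · simp [h0, extend, hU i]

theorem IsGauge.ediam_le_of_gaugeDiam_lt (hg : IsGauge h) {U : Set Z}
    (hU : Metric.ediam U ≠ ⊤) {r : ℝ≥0} (hr : gaugeDiam h U < h r) : Metric.ediam U ≤ r := by
  rw [← ENNReal.coe_toNNReal hU]
  exact_mod_cast (hg.mono.reflect_lt hr).le

theorem IsGauge.hausdorffM_eq_zero_of_content_eq_zero (hg : IsGauge h) {δ : ℝ≥0∞} (hδ : δ ≠ ⊤)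
    {A : Set Z} (hA : content h δ A = 0) : hausdorffM h A = 0 := by
  rw [hausdorffM_eq_iSup_content, ← nonpos_iff_eq_zero]
  refine iSup₂_le fun r hr => le_of_forall_gt fun ε hε => ?_
  obtain ⟨r', hr'0, hr'⟩ := ENNReal.lt_iff_exists_nnreal_btwn.1 hr
  have hlt : content h δ A < min ε (h r') :=
    hA ▸ lt_min hε (hg.pos _ (ENNReal.coe_pos.1 hr'0))
  obtain ⟨U, hAU, hU, hsum⟩ := hg.exists_cover_of_content_lt hlt
  have hU' : ∀ i, Metric.ediam (U i) ≤ r := fun i =>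
    (hg.ediam_le_of_gaugeDiam_lt (ne_top_of_le_ne_top hδ (hU i))
      ((ENNReal.le_tsum i).trans_lt (hsum.trans_le (min_le_right _ _)))).trans hr'.le
  exact (content_le_tsum hAU hU').trans_lt (hsum.trans_le (min_le_left _ _))

theorem hausdorffM_isCaratheodory [MeasurableSpace Z] [BorelSpace Z] {A : Set Z}
    (hA : MeasurableSet A) : (hausdorffM h).IsCaratheodory A := by
  apply (OuterMeasure.mkMetric'_isMetric _).borel_le_caratheodory
  rwa [← BorelSpace.measurable_eq (α := Z)]

theorem IsGauge.exists_open_superset (hg : IsGauge h) {U : Set Z} (hU : Metric.ediam U ≠ ⊤)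
    {η ε : ℝ≥0∞} (hη : 0 < η) (hε : 0 < ε) :
    ∃ V, IsOpen V ∧ U ⊆ V ∧ Metric.ediam V ≤ Metric.ediam U + η ∧
      gaugeDiam h V ≤ gaugeDiam h U + ε := by
  lift Metric.ediam U to ℝ≥0 using hU with d hd
  have hUd : gaugeDiam h U = h d := by simp [gaugeDiam, ← hd]
  have hlim : Tendsto (fun e : ℝ≥0 => d + 2 * e) (𝓝[>] 0) (𝓝 d) := by
    have hcont : Continuous fun e : ℝ≥0 => d + 2 * e := by fun_prop
    simpa using (hcont.tendsto 0).mono_left nhdsWithin_le_nhds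
  have hgauge : ∀ᶠ e : ℝ≥0 in 𝓝[>] 0, h (d + 2 * e) ≤ h d + ε := by
    rcases eq_or_ne (h d) ⊤ with htop | htop
    · simp [htop]
    · exact (((hg.continuous.tendsto d).comp hlim).eventually_le_const
        (ENNReal.lt_add_right htop hε.ne'))
  have hdiam : ∀ᶠ e : ℝ≥0 in 𝓝[>] 0, ((d + 2 * e : ℝ≥0) : ℝ≥0∞) ≤ d + η :=
    (ENNReal.tendsto_coe.2 hlim).eventually_le_const
      (ENNReal.lt_add_right ENNReal.coe_ne_top hη.ne')
  obtain ⟨e, ⟨hge, hde⟩, he0 : 0 < e⟩ := (hgauge.and hdiam |>.and self_mem_nhdsWithin).exists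
  have hthick : Metric.ediam (Metric.thickening e U) ≤ (d + 2 * e : ℝ≥0) := by
    simpa [← hd] using Metric.ediam_thickening_le (s := U) e
  refine ⟨Metric.thickening e U, Metric.isOpen_thickening,
    Metric.self_subset_thickening (by exact_mod_cast he0) _, hthick.trans hde, ?_⟩
  exact hUd ▸ (hg.gaugeDiam_le_of_ediam_le hthick).trans hge

theorem IsGauge.exists_open_cover_of_content_lt (hg : IsGauge h) {A : Set Z} {δ δ' w : ℝ≥0∞}
    (hδ : δ < δ') (hA : content h δ A < w) :
    ∃ V : ℕ → Set Z, A ⊆ (⋃ i, V i) ∧ (∀ i, IsOpen (V i)) ∧ (∀ i, Metric.ediam (V i) ≤ δ') ∧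
      ∑' i, gaugeDiam h (V i) ≤ w := by
  obtain ⟨U, hAU, hU, hsum⟩ := hg.exists_cover_of_content_lt hA
  obtain ⟨e, he, hesum⟩ := ENNReal.exists_pos_sum_of_countable' (tsub_pos_of_lt hsum).ne' ℕ
  choose V hVo hUV hV hgV using fun i => hg.exists_open_superset
    (ne_top_of_le_ne_top hδ.ne_top (hU i)) (tsub_pos_of_lt hδ) (he i)
  refine ⟨V, hAU.trans (iUnion_mono hUV), hVo, fun i => (hV i).trans ?_, ?_⟩
  · calc Metric.ediam (U i) + (δ' - δ) ≤ δ + (δ' - δ) := by gcongr; exact hU i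
      _ = δ' := add_tsub_cancel_of_le hδ.le
  · calc ∑' i, gaugeDiam h (V i) ≤ ∑' i, (gaugeDiam h (U i) + e i) := ENNReal.tsum_le_tsum hgV
      _ = ∑' i, gaugeDiam h (U i) + ∑' i, e i := ENNReal.tsum_add
      _ ≤ ∑' i, gaugeDiam h (U i) + (w - ∑' i, gaugeDiam h (U i)) := by gcongr
      _ = w := add_tsub_cancel_of_le hsum.le

end Content

/-- The points reached from `x` by three jumps of length at most `T`. In an ultrametric space this
is the closed ball of radius `T`, in general only a set of diameter at most `6 * T`. -/
def jumpBall {Z : Type*} [EMetricSpace Z] (T : ℝ≥0) (x : Z) : Set Z :=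
  {y | ∃ u v, edist y u ≤ T ∧ edist u v ≤ T ∧ edist v x ≤ T}

/-- The common consequence of the three alternatives in property (H): the content of the jump ball
of radius `T ≤ δ₀` is at most `C * h T`, with `h δ₀` finite. -/
structure EnlargementBound (Z : Type*) [EMetricSpace Z] (h : ℝ≥0 → ℝ≥0∞) (C δ₀ : ℝ≥0) : Prop where
  gauge : IsGauge h
  pos : 0 < δ₀
  lt_top : h δ₀ < ⊤
  content_jumpBall_le : ∀ (x : Z) (T : ℝ≥0), T ≤ δ₀ → content h (6 * T) (jumpBall T x) ≤ C * h T

section Enlargement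

variable {Z : Type*} [EMetricSpace Z] {h : ℝ≥0 → ℝ≥0∞}

theorem ediam_jumpBall_le (T : ℝ≥0) (x : Z) : Metric.ediam (jumpBall T x) ≤ 6 * T := by
  have hx : ∀ y ∈ jumpBall T x, edist y x ≤ 3 * T := by
    rintro y ⟨u, v, hyu, huv, hvx⟩
    calc edist y x ≤ edist y u + edist u v + edist v x := edist_triangle4 _ _ _ _
      _ ≤ T + T + T := by gcongr
      _ = 3 * T := by ring
  refine Metric.ediam_le fun y hy z hz => ?_
  calc edist y z ≤ edist y x + edist z x := edist_triangle_right _ _ _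
    _ ≤ 3 * T + 3 * T := add_le_add (hx y hy) (hx z hz)
    _ = 6 * T := by ring

theorem IsGauge.exists_pos_lt_top (hg : IsGauge h) : ∃ e : ℝ≥0, 0 < e ∧ h e < ⊤ := by
  have hlim : Tendsto h (𝓝[>] 0) (𝓝 0) :=
    hg.map_zero ▸ (hg.continuous.tendsto 0).mono_left nhdsWithin_le_nhds
  obtain ⟨e, he, he0⟩ := ((hlim.eventually_lt_const ENNReal.zero_lt_top).and
    self_mem_nhdsWithin).exists
  exact ⟨e, he0, he⟩

theorem IsGauge.exists_triple_le_of_finiteOrder (hg : IsGauge h) (hfo : FiniteOrder h) :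
    ∃ C e : ℝ≥0, 0 < e ∧ h e < ⊤ ∧ ∀ t ≤ e, h (3 * t) ≤ C * h t := by
  obtain ⟨e, he0, hetop⟩ := hg.exists_pos_lt_top
  obtain ⟨C, hC, -⟩ := ENNReal.lt_iff_exists_nnreal_btwn.1 hfo
  obtain ⟨ε, hε0 : 0 < ε, hε⟩ := mem_nhdsGT_iff_exists_Ioc_subset.1 (eventually_lt_of_limsup_lt hC)
  refine ⟨C, min e ε, lt_min he0 hε0, (hg.mono (min_le_left e ε)).trans_lt hetop, fun t ht => ?_⟩
  rcases eq_zero_or_pos t with rfl | ht0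
  · simp [hg.map_zero]
  · exact (ENNReal.div_le_iff (hg.pos t ht0).ne'
      ((hg.mono (ht.trans (min_le_left _ _))).trans_lt hetop).ne).1
      (hε ⟨ht0, ht.trans (min_le_right _ _)⟩).le

theorem IsGauge.exists_enlargementBound_of_finiteOrder (hg : IsGauge h) (hfo : FiniteOrder h) :
    ∃ C δ₀, EnlargementBound Z h C δ₀ := by
  obtain ⟨C, e, he0, hetop, hC⟩ := hg.exists_triple_le_of_finiteOrder hfo
  refine ⟨C * C, e / 3, hg, by positivity,
    (hg.mono (div_le_self zero_le (by norm_num))).trans_lt hetop, fun x T hT => ?_⟩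
  have h3T : 3 * T ≤ e := by rwa [mul_comm, ← le_div_iff₀ (by norm_num)]
  calc content h (6 * T) (jumpBall T x) ≤ gaugeDiam h (jumpBall T x) :=
        content_le_gaugeDiam (ediam_jumpBall_le T x)
    _ ≤ h (6 * T) := hg.gaugeDiam_le_of_ediam_le (by exact_mod_cast ediam_jumpBall_le T x)
    _ ≤ h (3 * (3 * T)) := hg.mono (by rw [← mul_assoc]; gcongr; norm_num)
    _ ≤ C * h (3 * T) := hC _ h3T
    _ ≤ C * (C * h T) := by
      gcongr; exact hC _ ((le_mul_of_one_le_left zero_le (by norm_num)).trans h3T)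
    _ = ↑(C * C) * h T := by push_cast; ring

theorem IsGauge.exists_enlargementBound_of_finiteStructuralDim (hg : IsGauge h)
    (hfd : FiniteStructuralDim Z) : ∃ C δ₀, EnlargementBound Z h C δ₀ := by
  obtain ⟨e, he0, hetop⟩ := hg.exists_pos_lt_top
  obtain ⟨N, r, hr, hN⟩ := hfd (1 / 6) (by norm_num)
  refine ⟨N, min e (r / 6), hg, lt_min he0 (by positivity),
    (hg.mono (min_le_left _ _)).trans_lt hetop, fun x T hT => ?_⟩
  have h6T : 6 * T ≤ r := by
    rw [mul_comm, ← le_div_iff₀ (by norm_num)]; exact hT.trans (min_le_right _ _)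
  obtain ⟨U, hcover, hU⟩ :=
    hN (jumpBall T x) ((ediam_jumpBall_le T x).trans (by exact_mod_cast h6T))
  have hUT : ∀ i, Metric.ediam (U i) ≤ T := fun i =>
    calc Metric.ediam (U i) ≤ (1 / 6 : ℝ≥0) * (6 * T : ℝ≥0) := (hU i).trans (by
          gcongr; exact_mod_cast ediam_jumpBall_le T x)
      _ = T := by rw [← ENNReal.coe_mul, ← mul_assoc]; norm_num
  calc content h (6 * T) (jumpBall T x) ≤ content h T (jumpBall T x) :=
        content_anti (le_mul_of_one_le_left zero_le (by norm_num)) _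
    _ ≤ ∑' i, gaugeDiam h (U i) := content_le_tsum hcover hUT
    _ ≤ ∑' _ : Fin N, h T := ENNReal.tsum_le_tsum fun i => hg.gaugeDiam_le_of_ediam_le (hUT i)
    _ = (N : ℝ≥0) * h T := by simp [tsum_fintype]

theorem IsGauge.exists_enlargementBound_of_ultrametric (hg : IsGauge h)
    (hum : ∀ x y z : Z, edist x z ≤ max (edist x y) (edist y z)) :
    ∃ C δ₀, EnlargementBound Z h C δ₀ := by
  obtain ⟨e, he0, hetop⟩ := hg.exists_pos_lt_top
  refine ⟨1, e, hg, he0, hetop, fun x T _ => ?_⟩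
  have trans : ∀ {a b c : Z}, edist a b ≤ T → edist b c ≤ T → edist a c ≤ T :=
    fun {a b c} hab hbc => (hum a b c).trans (max_le hab hbc)
  have hx : ∀ y ∈ jumpBall T x, edist y x ≤ T := by
    rintro y ⟨u, v, hyu, huv, hvx⟩
    exact trans hyu (trans huv hvx)
  have hdiam : Metric.ediam (jumpBall T x) ≤ T :=
    Metric.ediam_le fun y hy z hz => trans (hx y hy) (edist_comm z x ▸ hx z hz)
  calc content h (6 * T) (jumpBall T x) ≤ gaugeDiam h (jumpBall T x) :=
        content_le_gaugeDiam (ediam_jumpBall_le T x)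
    _ ≤ h T := hg.gaugeDiam_le_of_ediam_le hdiam
    _ = (1 : ℝ≥0) * h T := by simp

end Enlargement

theorem exists_enlargementBound {Z : Type*} [MetricSpace Z] {h : ℝ≥0 → ℝ≥0∞} (hg : IsGauge h)
    (halt : FiniteOrder h ∨ FiniteStructuralDim Z ∨
      ∀ x y z : Z, dist x z ≤ max (dist x y) (dist y z)) : ∃ C δ₀, EnlargementBound Z h C δ₀ := by
  rcases halt with hfo | hfd | hum
  · exact hg.exists_enlargementBound_of_finiteOrder hfo
  · exact hg.exists_enlargementBound_of_finiteStructuralDim hfd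
  · refine hg.exists_enlargementBound_of_ultrametric fun x y z => ?_
    simp only [edist_dist, ← ENNReal.ofReal_max]
    exact ENNReal.ofReal_le_ofReal (hum x y z)

/-- The largest `t ≤ δ` with `h t ≤ w`: a generalized inverse of the gauge, truncated at `δ`. -/
noncomputable def gaugeInv (h : ℝ≥0 → ℝ≥0∞) (δ : ℝ≥0) (w : ℝ≥0∞) : ℝ≥0 :=
  sSup {t | t ≤ δ ∧ h t ≤ w}

section GaugeInv

variable {h : ℝ≥0 → ℝ≥0∞}

theorem IsGauge.isGreatest_gaugeInv (hg : IsGauge h) (δ : ℝ≥0) (w : ℝ≥0∞) :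
    IsGreatest {t | t ≤ δ ∧ h t ≤ w} (gaugeInv h δ w) := by
  have hcompact : IsCompact {t | t ≤ δ ∧ h t ≤ w} := by
    have : {t | t ≤ δ ∧ h t ≤ w} = Icc 0 δ ∩ h ⁻¹' Iic w := by ext; simp
    exact this ▸ isCompact_Icc.inter_right (isClosed_Iic.preimage hg.continuous)
  exact hcompact.isGreatest_sSup ⟨0, zero_le, by simp [hg.map_zero]⟩

theorem IsGauge.gaugeInv_le (hg : IsGauge h) (δ : ℝ≥0) (w : ℝ≥0∞) : gaugeInv h δ w ≤ δ :=
  (hg.isGreatest_gaugeInv δ w).1.1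

theorem IsGauge.apply_gaugeInv_le (hg : IsGauge h) (δ : ℝ≥0) (w : ℝ≥0∞) :
    h (gaugeInv h δ w) ≤ w :=
  (hg.isGreatest_gaugeInv δ w).1.2

theorem IsGauge.ediam_le_gaugeInv {Z : Type*} [EMetricSpace Z] (hg : IsGauge h) {δ : ℝ≥0}
    {w : ℝ≥0∞} {U : Set Z} (hU : Metric.ediam U ≤ δ) (hw : gaugeDiam h U ≤ w) :
    Metric.ediam U ≤ gaugeInv h δ w := by
  rw [gaugeDiam] at hw
  lift Metric.ediam U to ℝ≥0 using ne_top_of_le_ne_top ENNReal.coe_ne_top hU with d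
  exact_mod_cast (hg.isGreatest_gaugeInv δ w).2 ⟨by exact_mod_cast hU, by simpa using hw⟩

end GaugeInv

section Vitali

variable {Z : Type*} [EMetricSpace Z] {h : ℝ≥0 → ℝ≥0∞} {C δ₀ : ℝ≥0}

theorem EnlargementBound.gaugeDiam_ne_top (hE : EnlargementBound Z h C δ₀) {U : Set Z}
    (hU : Metric.ediam U ≤ δ₀) : gaugeDiam h U ≠ ⊤ :=
  ((hE.gauge.gaugeDiam_le_of_ediam_le hU).trans_lt hE.lt_top).ne

theorem EnlargementBound.content_jumpBall_gaugeInv_le (hE : EnlargementBound Z h C δ₀) {δ : ℝ≥0}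
    (hδ : δ ≤ δ₀) (w : ℝ≥0∞) (x : Z) :
    content h (6 * δ) (jumpBall (gaugeInv h δ w) x) ≤ C * w := by
  have hle := hE.gauge.gaugeInv_le δ w
  calc content h (6 * δ) (jumpBall (gaugeInv h δ w) x)
      ≤ content h (6 * gaugeInv h δ w) (jumpBall (gaugeInv h δ w) x) :=
        content_anti (by gcongr) _
    _ ≤ C * h (gaugeInv h δ w) := hE.content_jumpBall_le _ _ (hle.trans hδ)
    _ ≤ C * w := by gcongr; exact hE.gauge.apply_gaugeInv_le δ w

theorem EnlargementBound.exists_disjoint_content_biUnion_le (hE : EnlargementBound Z h C δ₀)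
    {ι : Type*} [Countable ι] (U : ι → Set Z) (I : Set ι) {δ : ℝ≥0} (hδ : δ ≤ δ₀)
    (hU : ∀ i ∈ I, Metric.ediam (U i) ≤ δ) :
    ∃ J ⊆ I, J.PairwiseDisjoint U ∧
      content h (6 * δ) (⋃ i ∈ I, U i) ≤ 2 * C * ∑' j : J, gaugeDiam h (U j) := by
  have hfin : ∀ i ∈ I, gaugeDiam h (U i) ≠ ⊤ := fun i hi =>
    hE.gaugeDiam_ne_top ((hU i hi).trans (by exact_mod_cast hδ))
  have hδtop : h δ ≠ ⊤ := ((hE.gauge.mono hδ).trans_lt hE.lt_top).ne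
  obtain ⟨J, hJI, hJd, hJ⟩ := Vitali.exists_disjoint_subfamily_covering_enlargement U
    {i ∈ I | (U i).Nonempty} (fun i => (gaugeDiam h (U i)).toReal) 2 one_lt_two
    (fun _ _ => ENNReal.toReal_nonneg) (h δ).toReal
    (fun i hi => ENNReal.toReal_mono hδtop (hE.gauge.gaugeDiam_le_of_ediam_le (hU i hi.1)))
    (fun i hi => hi.2)
  refine ⟨J, fun j hj => (hJI hj).1, hJd, ?_⟩
  choose x hx using fun j : J => (hJI j.2).2
  set T : J → ℝ≥0 := fun j => gaugeInv h δ (2 * gaugeDiam h (U j))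
  have hcover : (⋃ i ∈ I, U i) ⊆ ⋃ j : J, jumpBall (T j) (x j) := by
    refine iUnion₂_subset fun i hi y hy => ?_
    obtain ⟨j, hj, ⟨z, hzi, hzj⟩, hle⟩ := hJ i ⟨hi, y, hy⟩
    have hjI := (hJI hj).1
    have hle' : gaugeDiam h (U i) ≤ 2 * gaugeDiam h (U j) := by
      rw [← ENNReal.toReal_le_toReal (hfin i hi) (ENNReal.mul_ne_top (by simp) (hfin j hjI))]
      simpa using hle
    refine mem_iUnion.2 ⟨⟨j, hj⟩, z, x ⟨j, hj⟩, ?_, ?_, by simp⟩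
    · exact (Metric.edist_le_ediam_of_mem hy hzi).trans
        (hE.gauge.ediam_le_gaugeInv (hU i hi) hle')
    · exact (Metric.edist_le_ediam_of_mem hzj (hx ⟨j, hj⟩)).trans
        (hE.gauge.ediam_le_gaugeInv (hU j hjI) (le_mul_of_one_le_left zero_le one_le_two))
  calc content h (6 * δ) (⋃ i ∈ I, U i)
      ≤ ∑' j : J, content h (6 * δ) (jumpBall (T j) (x j)) :=
        (measure_mono hcover).trans (measure_iUnion_le _)
    _ ≤ ∑' j : J, C * (2 * gaugeDiam h (U j)) :=
        ENNReal.tsum_le_tsum fun j => hE.content_jumpBall_gaugeInv_le hδ _ _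
    _ = 2 * C * ∑' j : J, gaugeDiam h (U j) := by
        simp only [← mul_assoc, mul_comm _ (2 : ℝ≥0∞), ENNReal.tsum_mul_left]

theorem encard_setOf_mem_le_diff_add_one {ι α : Type*} (U : ι → Set α) (I : Set ι) {J : Set ι}
    (hJ : J.PairwiseDisjoint U) (x : α) :
    {i ∈ I | x ∈ U i}.encard ≤ {i ∈ I \ J | x ∈ U i}.encard + 1 := by
  have hJx : {i ∈ J | x ∈ U i}.encard ≤ 1 := by
    refine encard_le_one_iff.2 fun i j hi hj => ?_
    by_contra hne
    exact disjoint_left.1 (hJ hi.1 hj.1 hne) hi.2 hj.2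
  have hsplit : {i ∈ I | x ∈ U i} ⊆ {i ∈ I \ J | x ∈ U i} ∪ {i ∈ J | x ∈ U i} := by
    intro i hi
    by_cases hiJ : i ∈ J
    · exact .inr ⟨hiJ, hi.2⟩
    · exact .inl ⟨⟨hi.1, hiJ⟩, hi.2⟩
  exact (encard_le_encard hsplit).trans ((encard_union_le _ _).trans (by gcongr))

/-- By induction on `p`: remove a disjoint Vitali subfamily, which lowers each multiplicity by at
most one. -/
theorem EnlargementBound.mul_content_le_of_le_encard (hE : EnlargementBound Z h C δ₀)
    {ι : Type*} [Countable ι] (U : ι → Set Z) {δ : ℝ≥0} (hδ : δ ≤ δ₀) (A : Set Z) (p : ℕ)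
    (I : Set ι) (hU : ∀ i ∈ I, Metric.ediam (U i) ≤ δ)
    (hA : ∀ x ∈ A, (p : ℕ∞) ≤ {i ∈ I | x ∈ U i}.encard) :
    p * content h (6 * δ) A ≤ 2 * C * ∑' i : I, gaugeDiam h (U i) := by
  induction p generalizing I with
  | zero => simp
  | succ p ih =>
    obtain ⟨J, hJI, hJd, hJ⟩ := hE.exists_disjoint_content_biUnion_le U I hδ hU
    have hA1 : content h (6 * δ) A ≤ 2 * C * ∑' j : J, gaugeDiam h (U j) := by
      refine (measure_mono fun x hx => ?_).trans hJ
      obtain ⟨i, hi, hxi⟩ : {i ∈ I | x ∈ U i}.Nonempty :=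
        one_le_encard_iff_nonempty.1 (le_trans (by simp) (hA x hx))
      exact mem_biUnion hi hxi
    have hdiff : ∀ x ∈ A, (p : ℕ∞) ≤ {i ∈ I \ J | x ∈ U i}.encard := fun x hx =>
      (ENat.add_le_add_iff_right ENat.one_ne_top).1
        ((hA x hx).trans (encard_setOf_mem_le_diff_add_one U I hJd x))
    have hsum : ∑' j : J, gaugeDiam h (U j) + ∑' i : ↥(I \ J), gaugeDiam h (U i)
        = ∑' i : I, gaugeDiam h (U i) := by
      rw [← ENNReal.summable.tsum_union_disjoint (f := fun i => gaugeDiam h (U i))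
        disjoint_sdiff_right ENNReal.summable, union_sdiff_cancel hJI]
    calc ((p + 1 : ℕ) : ℝ≥0∞) * content h (6 * δ) A
        = content h (6 * δ) A + p * content h (6 * δ) A := by push_cast; ring
      _ ≤ 2 * C * ∑' j : J, gaugeDiam h (U j) + 2 * C * ∑' i : ↥(I \ J), gaugeDiam h (U i) :=
        add_le_add hA1 (ih (I \ J) (fun i hi => hU i hi.1) hdiff)
      _ = 2 * C * ∑' i : I, gaugeDiam h (U i) := by rw [← mul_add, hsum]

end Vitali

/-- Positions for the members of a dyadically graded family: `2 ^ (q + 1)` of them at level `q`. -/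
abbrev Slot : Type := Σ q : ℕ, Fin (2 ^ (q + 1))

/-- A family of sets of total gauge at most `w`, indexed so that a set at level `q` has gauge
comparable to `w / 2 ^ q`. Unused positions carry the empty set. -/
structure DyadicFamily {Z : Type*} [EMetricSpace Z] (h : ℝ≥0 → ℝ≥0∞) (δ : ℝ≥0) (w : ℝ≥0∞)
    (U : Slot → Set Z) : Prop where
  ediam_le : ∀ s, Metric.ediam (U s) ≤ δ
  gaugeDiam_le : ∀ s, gaugeDiam h (U s) ≤ w / 2 ^ s.1
  le_two_mul : ∀ s, (U s).Nonempty → w / 2 ^ s.1 ≤ 2 * gaugeDiam h (U s)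
  tsum_le : ∑' s, gaugeDiam h (U s) ≤ w

section Dyadic

theorem div_two_pow_eq (w : ℝ≥0∞) (q : ℕ) : w / 2 ^ q = 2 * (w / 2 ^ (q + 1)) := by
  rw [pow_succ', ← mul_div_assoc, ENNReal.mul_div_mul_left _ _ two_ne_zero ENNReal.ofNat_ne_top]

theorem div_two_pow_antitone (w : ℝ≥0∞) : Antitone fun q : ℕ => w / 2 ^ q := fun a b hab => by
  dsimp only
  gcongr
  exact one_le_two

theorem tendsto_div_two_pow {w : ℝ≥0∞} (hw : w ≠ ⊤) :
    Tendsto (fun q : ℕ => w / 2 ^ q) atTop (𝓝 0) := by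
  have hpow : Tendsto (fun q : ℕ => (2⁻¹ : ℝ≥0∞) ^ q) atTop (𝓝 0) :=
    ENNReal.tendsto_pow_atTop_nhds_zero_of_lt_one ENNReal.one_half_lt_one
  simpa [ENNReal.div_eq_inv_mul, mul_comm, ENNReal.inv_pow] using
    ENNReal.Tendsto.const_mul (a := w) hpow (.inr hw)

theorem exists_dyadic_level {w a : ℝ≥0∞} (hw : w ≠ ⊤) (ha : a ≠ 0) (haw : a ≤ w) :
    ∃ q : ℕ, w / 2 ^ (q + 1) < a ∧ a ≤ w / 2 ^ q := by
  classical
  have hex : ∃ q : ℕ, w / 2 ^ (q + 1) < a :=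
    (((tendsto_add_atTop_iff_nat 1).2 (tendsto_div_two_pow hw)).eventually_lt_const
      (pos_iff_ne_zero.2 ha)).exists
  refine ⟨Nat.find hex, Nat.find_spec hex, ?_⟩
  rcases hq : Nat.find hex with _ | q
  · simpa using haw
  · exact not_lt.1 (Nat.find_min hex (hq ▸ q.lt_succ_self))

theorem exists_injective_slot {ι : Type*} (q : ι → ℕ)
    (hq : ∀ k, {i | q i = k}.encard ≤ (2 ^ (k + 1) : ℕ)) :
    ∃ slot : ι → Slot, Function.Injective slot ∧ ∀ i, (slot i).1 = q i := by
  have hemb : ∀ k, Nonempty ({i | q i = k} ↪ Fin (2 ^ (k + 1))) := by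
    intro k
    have hfin : Finite {i | q i = k} := finite_of_encard_le_coe (hq k)
    have := Fintype.ofFinite {i | q i = k}
    refine Function.Embedding.nonempty_of_card_le ?_
    rw [Fintype.card_fin]
    exact_mod_cast (coe_fintypeCard {i | q i = k}).trans_le (hq k)
  let e k := (hemb k).some
  refine ⟨fun i => ⟨q i, e (q i) ⟨i, rfl⟩⟩, fun i j hij => ?_, fun _ => rfl⟩
  have hval : ∀ k (a : {i | q i = k}) s, (⟨k, e k a⟩ : Slot) = s →
      ∀ b : {i | q i = s.1}, e s.1 b = s.2 → a.1 = b.1 := by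
    rintro k a _ rfl b hb
    exact congrArg Subtype.val ((e k).injective hb.symm)
  exact hval _ ⟨i, rfl⟩ _ hij ⟨j, rfl⟩ rfl

variable {Z : Type*} [EMetricSpace Z] {h : ℝ≥0 → ℝ≥0∞}

theorem encard_le_two_pow {ι : Type*} {a : ι → ℝ≥0∞} {w : ℝ≥0∞} (hw0 : w ≠ 0) (hw : w ≠ ⊤)
    (ha : ∑' i, a i ≤ w) (k : ℕ) : {i | w / 2 ^ k ≤ a i}.encard ≤ (2 ^ k : ℕ) := by
  have hk : w / 2 ^ k ≠ 0 := by simp [hw0]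
  obtain ⟨hfin, hcard⟩ := ENNReal.finset_card_const_le_le_of_tsum_le hw ha hk
  rw [← hfin.coe_toFinset, encard_coe_eq_coe_finsetCard, ENat.natCast_le_natCast]
  have hdiv : w / (w / 2 ^ k) = ((2 ^ k : ℕ) : ℝ≥0∞) := by
    rw [ENNReal.div_eq_inv_mul, ENNReal.inv_div (by simp) (by simp), ENNReal.div_mul_cancel hw0 hw]
    norm_cast
  exact_mod_cast hdiv ▸ hcard

theorem IsGauge.gaugeDiam_extend_empty (hg : IsGauge h) {ι κ : Type*} {f : ι → κ}
    (hf : Function.Injective f) (t : ι → Set Z) :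
    (fun s => gaugeDiam h (Function.extend f t (fun _ => ∅) s)) =
      Function.extend f (fun i => gaugeDiam h (t i)) 0 := by
  funext s
  by_cases hs : ∃ i, f i = s
  · obtain ⟨i, rfl⟩ := hs
    rw [hf.extend_apply, hf.extend_apply]
  · simp [Function.extend_apply' _ _ _ hs, hg.gaugeDiam_empty]

theorem IsGauge.dyadicFamily_extend (hg : IsGauge h) {ι : Type*} {slot : ι → Slot}
    (hslot : Function.Injective slot) {t : ι → Set Z} {δ : ℝ≥0} {w : ℝ≥0∞}
    (hsum : ∑' i, gaugeDiam h (t i) ≤ w) (hδ : ∀ i, Metric.ediam (t i) ≤ δ)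
    (hle : ∀ i, gaugeDiam h (t i) ≤ w / 2 ^ (slot i).1)
    (hge : ∀ i, w / 2 ^ (slot i).1 ≤ 2 * gaugeDiam h (t i)) :
    DyadicFamily h δ w (Function.extend slot t fun _ => ∅) := by
  have hrange : ∀ {p : Slot → Set Z → Prop}, (∀ s, p s ∅) → (∀ i, p (slot i) (t i)) →
      ∀ s, p s (Function.extend slot t (fun _ => ∅) s) := fun hempty ht s => by
    by_cases hs : ∃ i, slot i = s
    · obtain ⟨i, rfl⟩ := hs
      exact (hslot.extend_apply t _ i).symm ▸ ht i
    · exact (Function.extend_apply' t (fun _ => ∅) s hs).symm ▸ hempty s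
  refine ⟨hrange (p := fun _ V => Metric.ediam V ≤ δ) (by simp) hδ,
    hrange (p := fun s V => gaugeDiam h V ≤ w / 2 ^ s.1) (by simp [hg.gaugeDiam_empty]) hle,
    hrange (p := fun s V => V.Nonempty → w / 2 ^ s.1 ≤ 2 * gaugeDiam h V) (by simp)
      fun i _ => hge i, ?_⟩
  rwa [hg.gaugeDiam_extend_empty hslot, tsum_extend_zero hslot]

theorem IsGauge.exists_dyadicFamily (hg : IsGauge h) {t : ℕ → Set Z} {δ : ℝ≥0} {w : ℝ≥0∞}
    (hw0 : w ≠ 0) (hw : w ≠ ⊤) (hsum : ∑' i, gaugeDiam h (t i) ≤ w)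
    (ht : ∀ i, Metric.ediam (t i) ≤ δ) :
    ∃ U : Slot → Set Z, DyadicFamily h δ w U ∧ ∑' s, gaugeDiam h (U s) ≤ ∑' i, gaugeDiam h (t i) ∧
      ∀ i, gaugeDiam h (t i) ≠ 0 → ∃ s, U s = t i := by
  let I := {i // gaugeDiam h (t i) ≠ 0}
  choose q hlt hle using fun i : I =>
    exists_dyadic_level hw i.2 ((ENNReal.le_tsum i.1).trans hsum)
  have hsumI : ∑' i : I, gaugeDiam h (t i) ≤ ∑' i, gaugeDiam h (t i) :=
    ENNReal.tsum_comp_le_tsum_of_injective Subtype.val_injective _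
  obtain ⟨slot, hinj, hslot⟩ := exists_injective_slot q fun k =>
    (encard_le_encard fun i (hi : q i = k) => (hi ▸ hlt i).le).trans
      (encard_le_two_pow hw0 hw (hsumI.trans hsum) (k + 1))
  refine ⟨Function.extend slot (fun i : I => t i) fun _ => ∅,
    hg.dyadicFamily_extend hinj (hsumI.trans hsum) (fun i => ht i) (fun i => hslot i ▸ hle i)
      fun i => ?_, ?_, fun i hi => ⟨slot ⟨i, hi⟩, hinj.extend_apply _ _ _⟩⟩
  · rw [hslot, div_two_pow_eq]
    exact mul_le_mul_right (hlt i).le _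
  · rwa [hg.gaugeDiam_extend_empty hinj, tsum_extend_zero hinj]

end Dyadic

/-- A proposition depending on `n` that is eventually true or eventually false. -/
def EventuallyDecided (p : ℕ → Prop) : Prop :=
  (∀ᶠ n in atTop, p n) ∨ ∀ᶠ n in atTop, ¬ p n

/-- A sequence of dyadic families whose gauges converge to `D` in each slot, and such that every
member eventually meets, or eventually misses, the set in a given slot. -/
structure ConvergentFamilies {Z : Type*} [EMetricSpace Z] (h : ℝ≥0 → ℝ≥0∞) (δ : ℝ≥0) (w : ℝ≥0∞)
    (U : ℕ → Slot → Set Z) (D : Slot → ℝ≥0∞) : Prop where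
  dyadicFamily : ∀ n, DyadicFamily h δ w (U n)
  tendsto : ∀ s, Tendsto (fun n => gaugeDiam h (U n s)) atTop (𝓝 (D s))
  decided : ∀ m s s', EventuallyDecided fun n => (U m s ∩ U n s').Nonempty

/-- The points covered by all late families, but by each slot only finitely often. -/
def residual {Z : Type*} (U : ℕ → Slot → Set Z) : Set Z :=
  {x | (∀ s, ∀ᶠ n in atTop, x ∉ U n s) ∧ ∀ᶠ n in atTop, ∃ s, x ∈ U n s}

/-- The set `U m s` meets the sets in slot `s'` from some stage on, where the level of `s'` lies
between `Q` and that of `s`. -/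
def Meets {Z : Type*} (U : ℕ → Slot → Set Z) (Q m : ℕ) (s s' : Slot) : Prop :=
  Q ≤ s'.1 ∧ s'.1 ≤ s.1 ∧ ∀ᶠ n in atTop, (U m s ∩ U n s').Nonempty

/-- The union of all members meeting the slot `s'` in the sense of `Meets`. -/
def meetingUnion {Z : Type*} (U : ℕ → Slot → Set Z) (Q : ℕ) (s' : Slot) : Set Z :=
  {y | ∃ m s, Meets U Q m s s' ∧ y ∈ U m s}

/-- The points outside every `meetingUnion` that each family after stage `j` covers at a level at
least `Q`. -/
def deepSet {Z : Type*} (U : ℕ → Slot → Set Z) (Q j : ℕ) : Set Z :=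
  {x | (∀ s', x ∉ meetingUnion U Q s') ∧ ∀ n ≥ j, ∃ s : Slot, Q ≤ s.1 ∧ x ∈ U n s}

section HausdorffMeasure

variable {Z : Type*} [EMetricSpace Z]

/-- `hausdorffM h` as a measure on the Borel sets. -/
noncomputable def hausdorffMeasure (Z : Type*) [EMetricSpace Z] [MeasurableSpace Z] [BorelSpace Z]
    (h : ℝ≥0 → ℝ≥0∞) : Measure Z :=
  Measure.mkMetric fun d => h d.toNNReal

theorem hausdorffMeasure_apply [MeasurableSpace Z] [BorelSpace Z] (h : ℝ≥0 → ℝ≥0∞) (A : Set Z) :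
    hausdorffMeasure Z h A = hausdorffM h A := by
  rw [hausdorffMeasure, hausdorffM, OuterMeasure.coe_mkMetric]

theorem hausdorffM_iUnion_le_of_monotone {h : ℝ≥0 → ℝ≥0∞} {A : ℕ → Set Z} (hA : Monotone A)
    {w : ℝ≥0∞} (hw : ∀ n, hausdorffM h (A n) ≤ w) : hausdorffM h (⋃ n, A n) ≤ w := by
  borelize Z
  simp only [← hausdorffMeasure_apply] at hw ⊢
  exact hA.measure_iUnion (μ := hausdorffMeasure Z h) ▸ iSup_le hw

end HausdorffMeasure

section Scales

variable {h : ℝ≥0 → ℝ≥0∞}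

theorem IsGauge.gaugeInv_mono (hg : IsGauge h) (δ : ℝ≥0) : Monotone (gaugeInv h δ) :=
  fun v w hvw => (hg.isGreatest_gaugeInv δ w).2
    ⟨hg.gaugeInv_le δ v, (hg.apply_gaugeInv_le δ v).trans hvw⟩

theorem IsGauge.tendsto_gaugeInv (hg : IsGauge h) (δ : ℝ≥0) :
    Tendsto (gaugeInv h δ) (𝓝 0) (𝓝 0) := by
  refine tendsto_order.2 ⟨fun a ha => absurd ha not_lt_zero, fun e he => ?_⟩
  filter_upwards [gt_mem_nhds (hg.pos e he)] with w hw
  exact hg.mono.reflect_lt ((hg.apply_gaugeInv_le δ w).trans_lt hw)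

theorem IsGauge.tendsto_six_mul_gaugeInv (hg : IsGauge h) (δ : ℝ≥0) {w : ℝ≥0∞} (hw : w ≠ ⊤) :
    Tendsto (fun q : ℕ => (6 * gaugeInv h δ (w / 2 ^ q) : ℝ≥0∞)) atTop (𝓝 0) := by
  have hlim := ENNReal.tendsto_coe.2 ((hg.tendsto_gaugeInv δ).comp (tendsto_div_two_pow hw))
  simpa using ENNReal.Tendsto.const_mul (a := 6) hlim (.inr (by simp))

theorem finite_level_lt (Q : ℕ) : {s : Slot | s.1 < Q}.Finite := by
  have hsub : {s : Slot | s.1 < Q} ⊆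
      ⋃ q ∈ Iio Q, range fun i : Fin (2 ^ (q + 1)) => (⟨q, i⟩ : Slot) :=
    fun s hs => mem_biUnion (mem_Iio.2 hs) ⟨s.2, rfl⟩
  exact ((finite_Iio Q).biUnion fun _ _ => finite_range _).subset hsub

theorem tsum_le_of_tendsto {ι : Type*} {a : ℕ → ι → ℝ≥0∞} {D : ι → ℝ≥0∞} {b : ℕ → ℝ≥0∞} {w : ℝ≥0∞}
    (ha : ∀ i, Tendsto (fun n => a n i) atTop (𝓝 (D i))) (hb : Tendsto b atTop (𝓝 w))
    (hab : ∀ n, ∑' i, a n i ≤ b n) : ∑' i, D i ≤ w := by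
  rw [ENNReal.tsum_eq_iSup_sum]
  exact iSup_le fun S => le_of_tendsto_of_tendsto' (tendsto_finsetSum S fun i _ => ha i) hb
    fun n => (ENNReal.sum_le_tsum S).trans (hab n)

end Scales

section DeepSet

variable {Z : Type*}

theorem residual_diff_subset_iUnion_deepSet (U : ℕ → Slot → Set Z) (Q : ℕ) :
    residual U \ (⋃ s', meetingUnion U Q s') ⊆ ⋃ j, deepSet U Q j := by
  rintro x ⟨⟨hfin, hcov⟩, hx⟩
  have hlow : ∀ᶠ n in atTop, ∀ s ∈ {s : Slot | s.1 < Q}, x ∉ U n s :=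
    (finite_level_lt Q).eventually_all.2 fun s _ => hfin s
  obtain ⟨j, hj⟩ := eventually_atTop.1 (hlow.and hcov)
  refine mem_iUnion.2 ⟨j, fun s' hs' => hx (mem_iUnion.2 ⟨s', hs'⟩), fun n hn => ?_⟩
  obtain ⟨hlow, s, hs⟩ := hj n hn
  exact ⟨s, not_lt.1 fun hlt => hlow s hlt hs, hs⟩

theorem monotone_deepSet (U : ℕ → Slot → Set Z) (Q : ℕ) : Monotone (deepSet U Q) :=
  fun _ _ hab _ hx => ⟨hx.1, fun n hn => hx.2 n (hab.trans hn)⟩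

end DeepSet

theorem le_encard_le_of_strictMonoOn {N : ℕ} {f : Fin (2 * N) → ℕ}
    (hf : StrictMonoOn f {l | f l < N}) : (N : ℕ∞) ≤ {l | N ≤ f l}.encard := by
  have hlow : {l | f l < N}.encard ≤ N := by
    calc {l | f l < N}.encard = (f '' {l | f l < N}).encard := hf.injOn.encard_image.symm
      _ ≤ (Finset.range N : Set ℕ).encard :=
        encard_le_encard (image_subset_iff.2 fun l hl => Finset.mem_coe.2 (Finset.mem_range.2 hl))
      _ = N := by rw [encard_coe_eq_coe_finsetCard, Finset.card_range]
  have hsum : (N + N : ℕ∞) ≤ {l | N ≤ f l}.encard + N :=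
    calc (N + N : ℕ∞) = (univ : Set (Fin (2 * N))).encard := by
          rw [encard_univ, ENat.card_eq_coe_fintype_card, Fintype.card_fin, two_mul]; norm_cast
      _ = {l | f l < N}ᶜ.encard + {l | f l < N}.encard := by
          rw [add_comm, encard_add_encard_compl]
      _ ≤ {l | N ≤ f l}.encard + N := by
          gcongr
          exact fun l hl => (not_lt.1 hl : N ≤ f l)
  exact (ENat.add_le_add_iff_right (ENat.natCast_ne_top N)).1 hsum

namespace ConvergentFamilies

variable {Z : Type*} [EMetricSpace Z] {h : ℝ≥0 → ℝ≥0∞} {C δ₀ δ : ℝ≥0} {w : ℝ≥0∞}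
  {U : ℕ → Slot → Set Z} {D : Slot → ℝ≥0∞}

theorem ediam_le_gaugeInv (hU : ConvergentFamilies h δ w U D) (hg : IsGauge h) {q : ℕ} (n : ℕ)
    {s : Slot} (hs : q ≤ s.1) : Metric.ediam (U n s) ≤ gaugeInv h δ (w / 2 ^ q) :=
  hg.ediam_le_gaugeInv ((hU.dyadicFamily n).ediam_le s)
    (((hU.dyadicFamily n).gaugeDiam_le s).trans (div_two_pow_antitone w hs))

theorem meetingUnion_subset_jumpBall (hU : ConvergentFamilies h δ w U D) (hg : IsGauge h)
    {Q : ℕ} {s' : Slot} {y₀ : Z} (hy₀ : y₀ ∈ meetingUnion U Q s') :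
    meetingUnion U Q s' ⊆ jumpBall (gaugeInv h δ (w / 2 ^ s'.1)) y₀ := by
  obtain ⟨m₀, s₀, hmeet₀, hy₀⟩ := hy₀
  rintro y ⟨m, s, hmeet, hy⟩
  obtain ⟨n, ⟨v, hv₀, hvn⟩, u, hum, hun⟩ := (hmeet₀.2.2.and hmeet.2.2).exists
  exact ⟨u, v,
    (Metric.edist_le_ediam_of_mem hy hum).trans (hU.ediam_le_gaugeInv hg m hmeet.2.1),
    (Metric.edist_le_ediam_of_mem hun hvn).trans (hU.ediam_le_gaugeInv hg n le_rfl),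
    (Metric.edist_le_ediam_of_mem hv₀ hy₀).trans (hU.ediam_le_gaugeInv hg m₀ hmeet₀.2.1)⟩

theorem le_two_mul_limit (hU : ConvergentFamilies h δ w U D) {s : Slot}
    (hs : ∀ᶠ n in atTop, (U n s).Nonempty) : w / 2 ^ s.1 ≤ 2 * D s := by
  refine ge_of_tendsto (ENNReal.Tendsto.const_mul (hU.tendsto s) (.inr (by simp))) ?_
  filter_upwards [hs] with n hn using (hU.dyadicFamily n).le_two_mul s hn

theorem content_meetingUnion_le (hU : ConvergentFamilies h δ w U D)
    (hE : EnlargementBound Z h C δ₀) (hδ : δ ≤ δ₀) (Q : ℕ) (s' : Slot) :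
    content h (6 * gaugeInv h δ (w / 2 ^ Q)) (meetingUnion U Q s') ≤ 2 * C * D s' := by
  rcases (meetingUnion U Q s').eq_empty_or_nonempty with h0 | ⟨y₀, hy₀⟩
  · simp [h0]
  obtain ⟨m₀, s₀, hmeet₀, -⟩ := id hy₀
  have hscale : gaugeInv h δ (w / 2 ^ s'.1) ≤ gaugeInv h δ (w / 2 ^ Q) :=
    hE.gauge.gaugeInv_mono δ (div_two_pow_antitone w hmeet₀.1)
  have hinv := hE.gauge.gaugeInv_le δ (w / 2 ^ s'.1)
  calc content h (6 * gaugeInv h δ (w / 2 ^ Q)) (meetingUnion U Q s')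
      ≤ content h (6 * gaugeInv h δ (w / 2 ^ s'.1))
          (jumpBall (gaugeInv h δ (w / 2 ^ s'.1)) y₀) :=
        (content_anti (by gcongr) _).trans
          (measure_mono (hU.meetingUnion_subset_jumpBall hE.gauge hy₀))
    _ ≤ C * h (gaugeInv h δ (w / 2 ^ s'.1)) := hE.content_jumpBall_le _ _ (hinv.trans hδ)
    _ ≤ C * (2 * D s') := by
        gcongr
        exact (hE.gauge.apply_gaugeInv_le _ _).trans
          (hU.le_two_mul_limit (hmeet₀.2.2.mono fun n hn => hn.mono inter_subset_right))
    _ = 2 * C * D s' := by ring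

theorem content_iUnion_meetingUnion_le (hU : ConvergentFamilies h δ w U D)
    (hE : EnlargementBound Z h C δ₀) (hδ : δ ≤ δ₀) (Q : ℕ) :
    content h (6 * gaugeInv h δ (w / 2 ^ Q)) (⋃ s', meetingUnion U Q s') ≤ 2 * C * w :=
  calc content h (6 * gaugeInv h δ (w / 2 ^ Q)) (⋃ s', meetingUnion U Q s')
      ≤ ∑' s', 2 * C * D s' := (measure_iUnion_le _).trans
        (ENNReal.tsum_le_tsum (hU.content_meetingUnion_le hE hδ Q))
    _ = 2 * C * ∑' s', D s' := ENNReal.tsum_mul_left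
    _ ≤ 2 * C * w := by
        gcongr
        exact tsum_le_of_tendsto hU.tendsto tendsto_const_nhds fun n => (hU.dyadicFamily n).tsum_le

theorem eventually_disjoint (hU : ConvergentFamilies h δ w U D) (Q Q' a : ℕ) :
    ∀ᶠ b in atTop, ∀ s s' : Slot, Q ≤ s'.1 → s'.1 ≤ s.1 → s.1 < Q' →
      (∀ s'', ¬ Meets U Q a s s'') → Disjoint (U a s) (U b s') := by
  have hev : ∀ᶠ b in atTop, ∀ s ∈ {s : Slot | s.1 < Q'}, ∀ s' ∈ {s : Slot | s.1 < Q'},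
      Q ≤ s'.1 → s'.1 ≤ s.1 → (∀ s'', ¬ Meets U Q a s s'') → Disjoint (U a s) (U b s') := by
    refine (finite_level_lt Q').eventually_all.2 fun s _ =>
      (finite_level_lt Q').eventually_all.2 fun s' _ => ?_
    rcases hU.decided a s s' with hmeet | hmiss
    · exact .of_forall fun b hQ hle hno => absurd ⟨hQ, hle, hmeet⟩ (hno s')
    · filter_upwards [hmiss] with b hb _ _ _
      exact disjoint_iff_inter_eq_empty.2 (not_nonempty_iff_eq_empty.1 hb)
  filter_upwards [hev] with b hb s s' hQ hle hlt
  exact hb s hlt s' (hle.trans_lt hlt) hQ hle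

theorem exists_disjoint_subsequence (hU : ConvergentFamilies h δ w U D) (Q Q' j : ℕ) :
    ∃ f : ℕ → ℕ, (∀ n, j ≤ f n) ∧ ∀ a b, a < b → ∀ s s' : Slot, Q ≤ s'.1 → s'.1 ≤ s.1 →
      s.1 < Q' → (∀ s'', ¬ Meets U Q (f a) s s'') → Disjoint (U (f a) s) (U (f b) s') := by
  refine exists_seq_of_forall_finset_exists (fun n => j ≤ n) (fun a b => ∀ s s' : Slot,
    Q ≤ s'.1 → s'.1 ≤ s.1 → s.1 < Q' → (∀ s'', ¬ Meets U Q a s s'') →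
      Disjoint (U a s) (U b s')) fun S _ => ?_
  have hev := (Finset.eventually_all S).2 fun a _ => hU.eventually_disjoint Q Q' a
  obtain ⟨b, hb, hjb⟩ := (hev.and (eventually_ge_atTop j)).exists
  exact ⟨b, hjb, hb⟩

/-- Among `2 * N` separated families, those covering `x` below level `N` do so at strictly
increasing levels, so at least `N` of them cover it at level `N` or higher. -/
theorem exists_le_encard_of_mem_deepSet (hU : ConvergentFamilies h δ w U D) (Q j N : ℕ) :
    ∃ f : ℕ → ℕ, ∀ x ∈ deepSet U Q j, (N : ℕ∞) ≤
      {p : Fin (2 * N) × Slot | p ∈ {p | N ≤ p.2.1} ∧ x ∈ U (f p.1) p.2}.encard := by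
  obtain ⟨f, hjf, hdisj⟩ := hU.exists_disjoint_subsequence Q N j
  refine ⟨f, fun x hx => ?_⟩
  choose s hsQ hxs using fun l : Fin (2 * N) => hx.2 (f l) (hjf l)
  have hmono : StrictMonoOn (fun l => (s l).1) {l | (s l).1 < N} := by
    intro l hl l' _ hll'
    by_contra hlevel
    have hno : ∀ s'', ¬ Meets U Q (f l) (s l) s'' := fun s'' hmeet =>
      hx.1 s'' ⟨f l, s l, hmeet, hxs l⟩
    exact disjoint_left.1 (hdisj l l' hll' _ _ (hsQ l') (not_lt.1 hlevel) hl hno) (hxs l) (hxs l')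
  have hinj : Function.Injective fun l => (l, s l) := fun a b hab => (Prod.mk.inj hab).1
  refine (le_encard_le_of_strictMonoOn hmono).trans ?_
  rw [← hinj.encard_image]
  exact encard_le_encard (image_subset_iff.2 fun l hl => ⟨hl, hxs l⟩)

theorem content_deepSet_le (hU : ConvergentFamilies h δ w U D) (hE : EnlargementBound Z h C δ₀)
    (hδ : δ ≤ δ₀) (Q j : ℕ) {N : ℕ} (hN : N ≠ 0) :
    content h (6 * gaugeInv h δ (w / 2 ^ N)) (deepSet U Q j) ≤ 4 * C * w := by
  obtain ⟨f, hf⟩ := hU.exists_le_encard_of_mem_deepSet Q j N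
  have hsum : ∑' p : {p : Fin (2 * N) × Slot | N ≤ p.2.1}, gaugeDiam h (U (f p.1.1) p.1.2)
      ≤ 2 * N * w :=
    calc ∑' p : {p : Fin (2 * N) × Slot | N ≤ p.2.1}, gaugeDiam h (U (f p.1.1) p.1.2)
        ≤ ∑' p : Fin (2 * N) × Slot, gaugeDiam h (U (f p.1) p.2) :=
          ENNReal.tsum_comp_le_tsum_of_injective Subtype.val_injective
            fun p : Fin (2 * N) × Slot => gaugeDiam h (U (f p.1) p.2)
      _ = ∑' l : Fin (2 * N), ∑' s, gaugeDiam h (U (f l) s) :=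
          ENNReal.tsum_prod (f := fun (l : Fin (2 * N)) s => gaugeDiam h (U (f l) s))
      _ ≤ ∑' _ : Fin (2 * N), w := ENNReal.tsum_le_tsum fun l => (hU.dyadicFamily _).tsum_le
      _ = 2 * N * w := by simp [tsum_fintype]
  have hmul : (N : ℝ≥0∞) * content h (6 * gaugeInv h δ (w / 2 ^ N)) (deepSet U Q j)
      ≤ N * (4 * C * w) :=
    calc _ ≤ 2 * C * ∑' p : {p : Fin (2 * N) × Slot | N ≤ p.2.1}, gaugeDiam h (U (f p.1.1) p.1.2) :=
          hE.mul_content_le_of_le_encard (fun p : Fin (2 * N) × Slot => U (f p.1) p.2)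
            ((hE.gauge.gaugeInv_le _ _).trans hδ) _ N _
            (fun p hp => hU.ediam_le_gaugeInv hE.gauge _ hp) hf
      _ ≤ 2 * C * (2 * N * w) := by gcongr
      _ = N * (4 * C * w) := by ring
  exact (ENNReal.mul_le_mul_iff_right (by exact_mod_cast hN) (by simp)).1 hmul

theorem hausdorffM_deepSet_le (hU : ConvergentFamilies h δ w U D)
    (hE : EnlargementBound Z h C δ₀) (hδ : δ ≤ δ₀) (hw : w ≠ ⊤) (Q j : ℕ) :
    hausdorffM h (deepSet U Q j) ≤ 4 * C * w :=
  hausdorffM_le_of_content_le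
    ((tendsto_add_atTop_iff_nat 1).2 (hE.gauge.tendsto_six_mul_gaugeInv δ hw))
    fun n => hU.content_deepSet_le hE hδ Q j n.succ_ne_zero

theorem hausdorffM_residual_le (hU : ConvergentFamilies h δ w U D)
    (hE : EnlargementBound Z h C δ₀) (hδ : δ ≤ δ₀) (hw : w ≠ ⊤) :
    hausdorffM h (residual U) ≤ 6 * C * w := by
  rw [hausdorffM_eq_iSup_content]
  refine iSup₂_le fun r hr => ?_
  obtain ⟨Q, hQ⟩ := ((hE.gauge.tendsto_six_mul_gaugeInv δ hw).eventually_lt_const hr).exists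
  have hdeep : hausdorffM h (residual U \ ⋃ s', meetingUnion U Q s') ≤ 4 * C * w :=
    (measure_mono (residual_diff_subset_iUnion_deepSet U Q)).trans
      (hausdorffM_iUnion_le_of_monotone (monotone_deepSet U Q)
        (hU.hausdorffM_deepSet_le hE hδ hw Q))
  calc content h r (residual U)
      ≤ content h r ((⋃ s', meetingUnion U Q s') ∪ (residual U \ ⋃ s', meetingUnion U Q s')) :=
        measure_mono (by rw [union_sdiff_self]; exact subset_union_right)
    _ ≤ content h r (⋃ s', meetingUnion U Q s') +
          content h r (residual U \ ⋃ s', meetingUnion U Q s') := measure_union_le _ _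
    _ ≤ 2 * C * w + 4 * C * w := add_le_add
        ((content_anti hQ.le _).trans (hU.content_iUnion_meetingUnion_le hE hδ Q))
        ((content_le_hausdorffM hr _).trans hdeep)
    _ = 6 * C * w := by ring

end ConvergentFamilies

section LowerLimit

/-- The Kuratowski lower limit of a sequence of sets. -/
def lowerLimit {Z : Type*} [TopologicalSpace Z] (A : ℕ → Set Z) : Set Z :=
  {x | ∀ B, IsOpen B → x ∈ B → ∀ᶠ n in atTop, (B ∩ A n).Nonempty}

theorem ediam_lowerLimit_le {Z : Type*} [PseudoEMetricSpace Z] {A : ℕ → Set Z} {d : ℝ≥0∞}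
    (hd : Tendsto (fun n => Metric.ediam (A n)) atTop (𝓝 d)) :
    Metric.ediam (lowerLimit A) ≤ d := by
  refine Metric.ediam_le fun x hx y hy => ENNReal.le_of_forall_pos_le_add fun ε hε _ => ?_
  have hε2 : (0 : ℝ≥0∞) < ε / 2 := by simpa using hε.ne'
  refine ge_of_tendsto (hd.add_const (ε : ℝ≥0∞)) ?_
  filter_upwards [hx _ Metric.isOpen_eball (Metric.mem_eball_self hε2),
    hy _ Metric.isOpen_eball (Metric.mem_eball_self hε2)] with n ⟨x', hx', hxn⟩ ⟨y', hy', hyn⟩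
  calc edist x y ≤ edist x x' + edist x' y' + edist y' y := edist_triangle4 _ _ _ _
    _ ≤ ε / 2 + Metric.ediam (A n) + ε / 2 := by
        gcongr
        · exact (Metric.mem_eball'.1 hx').le
        · exact Metric.edist_le_ediam_of_mem hxn hyn
        · exact (Metric.mem_eball.1 hy').le
    _ = Metric.ediam (A n) + (ε / 2 + ε / 2) := by ring
    _ = Metric.ediam (A n) + ε := by rw [ENNReal.add_halves]

theorem eventually_notMem_of_notMem_lowerLimit {Z : Type*} [TopologicalSpace Z]
    [SecondCountableTopology Z] {A : ℕ → Set Z}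
    (hA : ∀ B ∈ TopologicalSpace.countableBasis Z, EventuallyDecided fun n => (B ∩ A n).Nonempty)
    {x : Z} (hx : x ∉ lowerLimit A) : ∀ᶠ n in atTop, x ∉ A n := by
  simp only [lowerLimit, mem_ofPred_eq, not_forall] at hx
  obtain ⟨G, hG, hxG, hmeet⟩ := hx
  obtain ⟨B, hB, hxB, hBG⟩ :=
    (TopologicalSpace.isBasis_countableBasis Z).exists_subset_of_mem_open hxG hG
  rcases hA B hB with hB | hB
  · exact absurd (hB.mono fun n hn => hn.mono (inter_subset_inter_left _ hBG)) hmeet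
  · exact hB.mono fun n hn hxn => hn ⟨x, hxB, hxn⟩

theorem exists_subseq_tendsto_eventuallyDecided {α β : Type*} [Countable α] [Countable β]
    (p : ℕ → α → Prop) (u : ℕ → β → ℝ≥0∞) :
    ∃ φ : ℕ → ℕ, StrictMono φ ∧ (∀ a, EventuallyDecided fun n => p (φ n) a) ∧
      ∃ d : β → ℝ≥0∞, ∀ b, Tendsto (fun n => u (φ n) b) atTop (𝓝 (d b)) := by
  classical
  obtain ⟨⟨v, d⟩, φ, hφ, hlim⟩ :=
    CompactSpace.tendsto_subseq fun n => ((fun a => decide (p n a) : α → Bool), u n)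
  rw [nhds_prod_eq, tendsto_prod_iff'] at hlim
  refine ⟨φ, hφ, fun a => ?_, d, tendsto_pi_nhds.1 hlim.2⟩
  have ha := tendsto_pi_nhds.1 hlim.1 a
  rw [nhds_discrete, tendsto_pure] at ha
  cases hva : v a
  · exact .inr (ha.mono fun n hn => by simpa [hva] using hn)
  · exact .inl (ha.mono fun n hn => by simpa [hva] using hn)

end LowerLimit

theorem IsGauge.hausdorffM_iUnion_gaugeDiam_eq_zero {Z ι : Type*} [EMetricSpace Z] [Countable ι]
    {h : ℝ≥0 → ℝ≥0∞} (hg : IsGauge h) {δ : ℝ≥0} {t : ι → Set Z}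
    (ht : ∀ i, Metric.ediam (t i) ≤ δ) :
    hausdorffM h (⋃ i ∈ {i | gaugeDiam h (t i) = 0}, t i) = 0 := by
  refine hg.hausdorffM_eq_zero_of_content_eq_zero (δ := δ) ENNReal.coe_ne_top ?_
  refine (measure_biUnion_null_iff (to_countable _)).2 fun i hi => ?_
  exact le_antisymm ((content_le_gaugeDiam (ht i)).trans_eq hi) zero_le

section Increasing

variable {Z : Type*} [EMetricSpace Z] [SecondCountableTopology Z] {h : ℝ≥0 → ℝ≥0∞} {δ : ℝ≥0}
  {w : ℝ≥0∞}

theorem IsGauge.exists_convergentFamilies_subseq (hg : IsGauge h) {U : ℕ → Slot → Set Z}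
    (hU : ∀ n, DyadicFamily h δ w (U n)) :
    ∃ (φ : ℕ → ℕ) (D : Slot → ℝ≥0∞), StrictMono φ ∧ ConvergentFamilies h δ w (U ∘ φ) D ∧
      ∀ s, Metric.ediam (lowerLimit fun n => U (φ n) s) ≤ δ ∧
        gaugeDiam h (lowerLimit fun n => U (φ n) s) ≤ D s ∧
        ∀ x ∉ lowerLimit fun n => U (φ n) s, ∀ᶠ n in atTop, x ∉ U (φ n) s := by
  have : Countable (TopologicalSpace.countableBasis Z) :=
    TopologicalSpace.countable_countableBasis Z
  let W : TopologicalSpace.countableBasis Z ⊕ ℕ × Slot → Set Z :=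
    Sum.elim (↑) fun p => U p.1 p.2
  obtain ⟨φ, hφ, hdec, d, hd⟩ := exists_subseq_tendsto_eventuallyDecided
    (fun n (a : (TopologicalSpace.countableBasis Z ⊕ ℕ × Slot) × Slot) =>
      (W a.1 ∩ U n a.2).Nonempty)
    fun n s => Metric.ediam (U n s)
  have hdδ : ∀ s, d s ≤ δ := fun s => le_of_tendsto' (hd s) fun n => (hU (φ n)).ediam_le s
  have hdt : ∀ s, d s ≠ ⊤ := fun s => ne_top_of_le_ne_top ENNReal.coe_ne_top (hdδ s)
  refine ⟨φ, fun s => h (d s).toNNReal, hφ, ⟨fun n => hU (φ n), fun s => ?_, fun m s s' => ?_⟩,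
    fun s => ⟨(ediam_lowerLimit_le (hd s)).trans (hdδ s), ?_, fun x hx => ?_⟩⟩
  · exact (hg.continuous.tendsto _).comp ((ENNReal.tendsto_toNNReal (hdt s)).comp (hd s))
  · exact hdec (.inr (φ m, s), s')
  · exact hg.mono (ENNReal.toNNReal_mono (hdt s) (ediam_lowerLimit_le (hd s)))
  · exact eventually_notMem_of_notMem_lowerLimit (fun B hB => hdec (.inl ⟨B, hB⟩, s)) hx

theorem EnlargementBound.exists_content_iUnion_diff_le {C δ₀ : ℝ≥0}
    (hE : EnlargementBound Z h C δ₀) (hδ : δ ≤ δ₀) (hw : w ≠ ⊤) {A : ℕ → Set Z} (hA : Monotone A)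
    (hAw : ∀ n, content h δ (A n) ≤ w) :
    ∃ R, hausdorffM h R < ⊤ ∧ content h δ ((⋃ n, A n) \ R) ≤ w := by
  have hg := hE.gauge
  have hw₁ : w + 1 ≠ ⊤ := by simp [hw]
  choose t hcov htδ hsum using fun n : ℕ => hg.exists_cover_of_content_lt
    ((hAw n).trans_lt (ENNReal.lt_add_right hw (b := ((n : ℝ≥0∞) + 1)⁻¹) (by simp)))
  choose U₀ hU₀ hU₀sum hU₀t using fun n => hg.exists_dyadicFamily (w := w + 1) (by simp) hw₁
    ((hsum n).le.trans (by gcongr; simp)) (htδ n)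
  obtain ⟨φ, D, hφ, hU, hlim⟩ := hg.exists_convergentFamilies_subseq hU₀
  have hD : ∑' s, D s ≤ w := by
    have hinv : Tendsto (fun n : ℕ => ((n : ℝ≥0∞) + 1)⁻¹) atTop (𝓝 0) := by
      simpa using (tendsto_add_atTop_iff_nat 1).2 ENNReal.tendsto_inv_nat_nhds_zero
    refine tsum_le_of_tendsto hU.tendsto ?_ fun n => (hU₀sum (φ n)).trans (hsum (φ n)).le
    simpa using (hinv.comp hφ.tendsto_atTop).const_add w
  let N : Set Z := ⋃ p ∈ {p : ℕ × ℕ | gaugeDiam h (t p.1 p.2) = 0}, t p.1 p.2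
  have hN : hausdorffM h N = 0 := hg.hausdorffM_iUnion_gaugeDiam_eq_zero fun p => htδ p.1 p.2
  have hsub : (⋃ n, A n) \ (residual (U₀ ∘ φ) ∪ N) ⊆ ⋃ s, lowerLimit fun n => U₀ (φ n) s := by
    rintro x ⟨hxA, hx⟩
    by_contra hxV
    refine hx (.inl ⟨fun s => (hlim s).2.2 x fun hxs => hxV (mem_iUnion.2 ⟨s, hxs⟩), ?_⟩)
    obtain ⟨m, hm⟩ := mem_iUnion.1 hxA
    filter_upwards [eventually_ge_atTop m] with n hn
    obtain ⟨i, hi⟩ := mem_iUnion.1 (hcov _ (hA (hn.trans (hφ.id_le n)) hm))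
    obtain ⟨s, hs⟩ := hU₀t (φ n) i fun h0 => hx (.inr (mem_biUnion (x := (φ n, i)) h0 hi))
    exact ⟨s, by simpa [hs] using hi⟩
  refine ⟨residual (U₀ ∘ φ) ∪ N, ?_, ?_⟩
  · calc hausdorffM h (residual (U₀ ∘ φ) ∪ N)
        ≤ hausdorffM h (residual (U₀ ∘ φ)) + hausdorffM h N := measure_union_le _ _
      _ ≤ 6 * C * (w + 1) + 0 := add_le_add (hU.hausdorffM_residual_le hE hδ hw₁) hN.le
      _ < ⊤ := by finiteness
  · calc content h δ ((⋃ n, A n) \ (residual (U₀ ∘ φ) ∪ N))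
        ≤ ∑' s, gaugeDiam h (lowerLimit fun n => U₀ (φ n) s) :=
          content_le_tsum hsub fun s => (hlim s).1
      _ ≤ ∑' s, D s := ENNReal.tsum_le_tsum fun s => (hlim s).2.1
      _ ≤ w := hD

end Increasing

/-- The sequences whose first `k` terms are bounded by those of `σ`. -/
def initialBox (σ : ℕ → ℕ) (k : ℕ) : Set (ℕ → ℕ) :=
  {x | ∀ i < k, x i ≤ σ i}

/-- `A` is covered by countably many sets of finite Hausdorff measure, measurable or not. -/
def SigmaCovered {Z : Type*} [EMetricSpace Z] (h : ℝ≥0 → ℝ≥0∞) (A : Set Z) : Prop :=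
  ∃ S : Set (Set Z), S.Countable ∧ (∀ R ∈ S, hausdorffM h R < ⊤) ∧ A ⊆ ⋃₀ S

section Capacitability

theorem monotone_initialBox_update (σ : ℕ → ℕ) (k : ℕ) :
    Monotone fun n => initialBox (Function.update σ k n) (k + 1) := by
  intro a b hab x hx i hi
  refine (hx i hi).trans ?_
  rcases eq_or_ne i k with rfl | hik
  · simpa using hab
  · simp [hik]

theorem iUnion_initialBox_update (σ : ℕ → ℕ) (k : ℕ) :
    ⋃ n, initialBox (Function.update σ k n) (k + 1) = initialBox σ k := by
  ext x
  refine mem_iUnion.trans ⟨fun ⟨n, hn⟩ i hi => ?_, fun hx => ⟨x k, fun i hi => ?_⟩⟩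
  · simpa [hi.ne] using hn i (hi.trans k.lt_succ_self)
  · rcases eq_or_ne i k with rfl | hik
    · simp
    · simpa [hik] using hx i (lt_of_le_of_ne (Nat.lt_succ_iff.1 hi) hik)

theorem exists_forall_initialBox {P : Set (ℕ → ℕ) → Prop}
    (hP : ∀ A : ℕ → Set (ℕ → ℕ), Monotone A → P (⋃ n, A n) → ∃ n, P (A n)) (huniv : P univ) :
    ∃ σ, ∀ k, P (initialBox σ k) := by
  have hstep : ∀ k σ, P (initialBox σ k) →
      ∃ n, P (initialBox (Function.update σ k n) (k + 1)) := fun k σ hσ =>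
    hP _ (monotone_initialBox_update σ k) ((iUnion_initialBox_update σ k).symm ▸ hσ)
  choose next hnext using hstep
  let S : (k : ℕ) → {σ : ℕ → ℕ // P (initialBox σ k)} := Nat.rec
    ⟨0, by simpa [initialBox] using huniv⟩
    fun k σ => ⟨Function.update σ.1 k (next k σ.1 σ.2), hnext k σ.1 σ.2⟩
  have hS : ∀ k, (S (k + 1)).1 = Function.update (S k).1 k (next k (S k).1 (S k).2) := fun _ => rfl
  have hagree : ∀ k, ∀ i < k, (S k).1 i = (S (i + 1)).1 i := by
    intro k i hi
    induction k, hi using Nat.le_induction with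
    | base => rfl
    | succ k hik ih => rw [hS, Function.update_of_ne (Nat.lt_of_succ_le hik).ne, ih]
  refine ⟨fun i => (S (i + 1)).1 i, fun k => ?_⟩
  convert (S k).2 using 1
  ext x
  exact forall₂_congr fun i hi => by rw [hagree k i hi]

variable {Z : Type*} [TopologicalSpace Z]

theorem isCompact_pi_Iic (σ : ℕ → ℕ) : IsCompact (univ.pi fun i => Iic (σ i)) :=
  isCompact_univ_pi fun i => (finite_Iic (σ i)).isCompact

theorem exists_image_initialBox_subset {f : (ℕ → ℕ) → Z} (hf : Continuous f) {σ : ℕ → ℕ}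
    {G : Set Z} (hG : IsOpen G) (hσ : f '' univ.pi (fun i => Iic (σ i)) ⊆ G) :
    ∃ k, f '' initialBox σ k ⊆ G := by
  by_contra! hcon
  choose x hx hxG using fun k => by simpa only [image_subset_iff, not_subset] using hcon k
  obtain ⟨y, hy, φ, hφ, hlim⟩ := (isCompact_pi_Iic σ).tendsto_subseq
    (x := fun k i => min (x k i) (σ i)) fun k i _ => mem_Iic.2 (min_le_right _ _)
  have hxy : Tendsto (fun k => x (φ k)) atTop (𝓝 y) := by
    refine tendsto_pi_nhds.2 fun i => (tendsto_pi_nhds.1 hlim i).congr' ?_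
    filter_upwards [eventually_gt_atTop i] with k hk
    exact min_eq_left (hx (φ k) i (hk.trans_le (hφ.id_le k)))
  obtain ⟨k, hk⟩ :=
    (((hf.tendsto y).comp hxy).eventually (hG.mem_nhds (hσ (mem_image_of_mem f hy)))).exists
  exact hxG (φ k) hk

theorem exists_isCompact_of_analyticSet {N : Set Z} (hN : AnalyticSet N) {P : Set Z → Prop}
    (hP : ∀ A : ℕ → Set Z, Monotone A → P (⋃ n, A n) → ∃ n, P (A n)) (hPN : P N) :
    ∃ K ⊆ N, IsCompact K ∧ ∀ G, IsOpen G → K ⊆ G → ∃ A ⊆ G, P A := by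
  rw [AnalyticSet] at hN
  obtain rfl | ⟨f, hf, rfl⟩ := hN
  · exact ⟨∅, subset_rfl, isCompact_empty, fun G _ _ => ⟨∅, empty_subset G, hPN⟩⟩
  obtain ⟨σ, hσ⟩ := exists_forall_initialBox (P := fun S => P (f '' S))
    (fun A hA hPA => hP (fun n => f '' A n) (fun _ _ hab => image_mono (hA hab))
      (by rwa [← image_iUnion])) (by rwa [image_univ])
  refine ⟨f '' univ.pi fun i => Iic (σ i), image_subset_range _ _, (isCompact_pi_Iic σ).image hf,
    fun G hG hKG => ?_⟩
  obtain ⟨k, hk⟩ := exists_image_initialBox_subset hf hG hKG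
  exact ⟨_, hk, hσ k⟩

theorem exists_isCompact_measure_pos_of_analyticSet [MeasurableSpace Z] {μ : Measure Z}
    [IsFiniteMeasure μ] [μ.OuterRegular] {N : Set Z} (hN : AnalyticSet N) (hpos : 0 < μ N) :
    ∃ K ⊆ N, IsCompact K ∧ 0 < μ K := by
  obtain ⟨K, hKN, hK, hKG⟩ := exists_isCompact_of_analyticSet hN (P := fun A => μ N / 2 < μ A)
    (fun A hA hlt => lt_iSup_iff.1 (hA.measure_iUnion (μ := μ) ▸ hlt))
    (ENNReal.half_lt_self hpos.ne' (measure_ne_top μ N))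
  refine ⟨K, hKN, hK, (ENNReal.half_pos hpos.ne').trans_le ?_⟩
  rw [K.measure_eq_iInf_isOpen μ]
  refine le_iInf₂ fun G hKG' => le_iInf fun hG => ?_
  obtain ⟨A, hAG, hA⟩ := hKG G hG hKG'
  exact hA.le.trans (measure_mono hAG)

end Capacitability

section SigmaCovered

variable {Z : Type*} [EMetricSpace Z] {h : ℝ≥0 → ℝ≥0∞}

theorem SigmaCovered.mono {A B : Set Z} (hB : SigmaCovered h B) (hAB : A ⊆ B) :
    SigmaCovered h A :=
  let ⟨S, hS, hSh, hBS⟩ := hB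
  ⟨S, hS, hSh, hAB.trans hBS⟩

theorem SigmaCovered.of_lt_top {A : Set Z} (hA : hausdorffM h A < ⊤) : SigmaCovered h A :=
  ⟨{A}, countable_singleton A, by simpa using hA, by simp⟩

theorem SigmaCovered.union {A B : Set Z} (hA : SigmaCovered h A) (hB : SigmaCovered h B) :
    SigmaCovered h (A ∪ B) := by
  obtain ⟨S, hS, hSh, hAS⟩ := hA
  obtain ⟨T, hT, hTh, hBT⟩ := hB
  exact ⟨S ∪ T, hS.union hT, fun R hR => hR.elim (hSh R) (hTh R),
    sUnion_union S T ▸ union_subset_union hAS hBT⟩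

theorem SigmaCovered.iUnion {ι : Type*} [Countable ι] {A : ι → Set Z}
    (hA : ∀ i, SigmaCovered h (A i)) : SigmaCovered h (⋃ i, A i) := by
  choose S hS hSh hAS using hA
  refine ⟨⋃ i, S i, countable_iUnion hS, fun R hR => ?_, ?_⟩
  · obtain ⟨i, hi⟩ := mem_iUnion.1 hR
    exact hSh i R hi
  · rw [sUnion_iUnion]
    exact iUnion_mono hAS

theorem IsGauge.exists_lt_content_diff (hg : IsGauge h) {δ : ℝ≥0} {N : Set Z}
    (hN : ¬ SigmaCovered h N) :
    ∃ c : ℝ≥0∞, 0 < c ∧ c ≠ ⊤ ∧ ∀ R, SigmaCovered h R → c < content h δ (N \ R) := by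
  by_contra! hcon
  choose R hR hNR using fun n : ℕ => hcon ((n : ℝ≥0∞)⁻¹ ⊓ 1) (by simp) (by simp)
  have hzero : content h δ (N \ ⋃ n, R n) = 0 := by
    refine le_antisymm (ge_of_tendsto' ENNReal.tendsto_inv_nat_nhds_zero fun n => ?_) zero_le
    exact ((measure_mono (sdiff_subset_sdiff_right (subset_iUnion R n))).trans
      (hNR n)).trans inf_le_left
  have hnull := hg.hausdorffM_eq_zero_of_content_eq_zero ENNReal.coe_ne_top hzero
  refine hN (((SigmaCovered.of_lt_top (hnull.trans_lt (by simp))).union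
    (SigmaCovered.iUnion hR)).mono ?_)
  rw [sdiff_union_self]
  exact subset_union_left

variable {C δ₀ : ℝ≥0} [SecondCountableTopology Z]

theorem EnlargementBound.exists_lt_content_diff_of_monotone (hE : EnlargementBound Z h C δ₀)
    {c : ℝ≥0∞} (hc : c ≠ ⊤) {A : ℕ → Set Z} (hA : Monotone A)
    (hlt : ∀ R, SigmaCovered h R → c < content h δ₀ ((⋃ n, A n) \ R)) :
    ∃ n, ∀ R, SigmaCovered h R → c < content h δ₀ (A n \ R) := by
  by_contra! hcon
  choose R hR hAR using hcon
  obtain ⟨R', hR', hle⟩ := hE.exists_content_iUnion_diff_le le_rfl hc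
    (A := fun n => A n \ ⋃ n, R n) (fun a b hab => sdiff_subset_sdiff_left (hA hab))
    fun n => (measure_mono (sdiff_subset_sdiff_right (subset_iUnion R n))).trans (hAR n)
  rw [← iUnion_sdiff, sdiff_sdiff] at hle
  exact (hlt _ ((SigmaCovered.iUnion hR).union (.of_lt_top hR'))).not_ge hle

theorem EnlargementBound.exists_isCompact_of_not_sigmaCovered (hE : EnlargementBound Z h C δ₀)
    {N : Set Z} (hN : AnalyticSet N) (hcov : ¬ SigmaCovered h N) :
    ∃ K ⊆ N, IsCompact K ∧ 0 < hausdorffM h K := by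
  obtain ⟨c, hc0, hct, hc⟩ := hE.gauge.exists_lt_content_diff (δ := δ₀) hcov
  obtain ⟨K, hKN, hK, hKG⟩ := exists_isCompact_of_analyticSet hN
    (P := fun A => ∀ R, SigmaCovered h R → c < content h δ₀ (A \ R))
    (fun A hA => hE.exists_lt_content_diff_of_monotone hct hA) hc
  refine ⟨K, hKN, hK, pos_iff_ne_zero.2 fun h0 => ?_⟩
  have hδ₀ : (δ₀ : ℝ≥0∞) ≠ 0 := ENNReal.coe_ne_zero.2 hE.pos.ne'
  have hlt : content h (δ₀ / 2) K < c :=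
    (content_le_hausdorffM (ENNReal.half_pos hδ₀) K).trans_lt (h0.trans_lt hc0)
  obtain ⟨V, hKV, hVo, hVδ, hVc⟩ := hE.gauge.exists_open_cover_of_content_lt
    (ENNReal.half_lt_self hδ₀ ENNReal.coe_ne_top) hlt
  obtain ⟨A, hAV, hA⟩ := hKG _ (isOpen_iUnion hVo) hKV
  have hAc : c < content h δ₀ (A \ ∅) := hA ∅ (.of_lt_top (by simp))
  rw [sdiff_empty] at hAc
  exact hAc.not_ge ((content_le_tsum hAV hVδ).trans hVc)

end SigmaCovered

theorem exists_isCompact_of_sigmaCovered {Z : Type*} [EMetricSpace Z] {h : ℝ≥0 → ℝ≥0∞} {N : Set Z}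
    (hN : AnalyticSet N) (hcov : SigmaCovered h N) (hpos : 0 < hausdorffM h N) :
    ∃ K ⊆ N, IsCompact K ∧ 0 < hausdorffM h K := by
  borelize Z
  obtain ⟨S, hS, hSh, hNS⟩ := hcov
  simp only [← hausdorffMeasure_apply] at hpos hSh ⊢
  obtain ⟨R, hRS, hR⟩ : ∃ R ∈ S, 0 < hausdorffMeasure Z h (N ∩ R) := by
    by_contra! hcon
    have hnull := (measure_biUnion_null_iff hS).2 fun R hR => le_antisymm (hcon R hR) zero_le
    rw [← inter_iUnion₂, ← sUnion_eq_biUnion, inter_eq_left.2 hNS] at hnull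
    exact hpos.ne' hnull
  let M := toMeasurable (hausdorffMeasure Z h) R
  have hM : MeasurableSet M := measurableSet_toMeasurable _ _
  have : IsFiniteMeasure ((hausdorffMeasure Z h).restrict M) :=
    ⟨by simpa [M, measure_toMeasurable] using hSh R hRS⟩
  have hNM : 0 < (hausdorffMeasure Z h).restrict M N := by
    rw [Measure.restrict_apply' hM]
    exact hR.trans_le (measure_mono (inter_subset_inter_right N (subset_toMeasurable _ R)))
  obtain ⟨K, hKN, hK, hKpos⟩ := exists_isCompact_measure_pos_of_analyticSet hN hNM
  exact ⟨K, hKN, hK, hKpos.trans_le (Measure.restrict_apply_le M K)⟩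

theorem EnlargementBound.exists_isCompact_of_analyticSet {Z : Type*} [EMetricSpace Z]
    [SecondCountableTopology Z] {h : ℝ≥0 → ℝ≥0∞} {C δ₀ : ℝ≥0} (hE : EnlargementBound Z h C δ₀)
    {N : Set Z} (hN : AnalyticSet N) (hpos : 0 < hausdorffM h N) :
    ∃ K ⊆ N, IsCompact K ∧ 0 < hausdorffM h K := by
  by_cases hcov : SigmaCovered h N
  · exact exists_isCompact_of_sigmaCovered hN hcov hpos
  · exact hE.exists_isCompact_of_not_sigmaCovered hN hcov

section WeightedCovers

theorem le_of_forall_natCast_mul_le_add {a b e : ℝ≥0∞} (he : e ≠ ⊤)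
    (hab : ∀ p : ℕ, p * a ≤ p * b + e) : a ≤ b := by
  have hlim : Tendsto (fun p : ℕ => b + e * (p : ℝ≥0∞)⁻¹) atTop (𝓝 b) := by
    simpa using (ENNReal.Tendsto.const_mul ENNReal.tendsto_inv_nat_nhds_zero
      (.inr he)).const_add b
  refine ge_of_tendsto hlim ?_
  filter_upwards [eventually_ne_atTop 0] with p hp
  have hp0 : (p : ℝ≥0∞) ≠ 0 := by exact_mod_cast hp
  refine (ENNReal.mul_le_mul_iff_right hp0 (ENNReal.natCast_ne_top p)).1 ((hab p).trans_eq ?_)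
  rw [mul_add, mul_left_comm, ENNReal.mul_inv_cancel hp0 (ENNReal.natCast_ne_top p), mul_one]

theorem le_encard_sigma_ceil {Z ι : Type*} (U : ι → Set Z) (c : ι →₀ ℝ≥0) {x : Z}
    (hx : 1 ≤ Finsupp.linearCombination ℝ≥0 (fun i => (U i).indicator (1 : Z → ℝ≥0) x) c) (p : ℕ) :
    (p : ℕ∞) ≤ {q ∈ (univ : Set (Σ i : c.support, Fin ⌈p * c i⌉₊)) | x ∈ U q.1}.encard := by
  classical
  let T : Finset c.support := Finset.univ.filter fun i => x ∈ U i
  let F : Finset (Σ i : c.support, Fin ⌈p * c i⌉₊) := T.sigma fun _ => Finset.univ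
  have hF : p ≤ F.card := by
    have hreal : (p : ℝ≥0) ≤ F.card :=
      calc (p : ℝ≥0)
          ≤ p * Finsupp.linearCombination ℝ≥0 (fun i => (U i).indicator (1 : Z → ℝ≥0) x) c :=
            le_mul_of_one_le_right zero_le hx
        _ = ∑ i ∈ T, p * c i := by
            rw [Finsupp.linearCombination_apply, Finsupp.sum, ← Finset.mul_sum, Finset.sum_filter,
              ← Finset.sum_coe_sort c.support]
            simp only [indicator_apply, Pi.one_apply, smul_eq_mul, mul_ite, mul_one, mul_zero]
        _ ≤ ∑ i ∈ T, (⌈p * c i⌉₊ : ℝ≥0) :=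
            Finset.sum_le_sum fun i _ => Nat.le_ceil _
        _ = F.card := by
            simp only [F, Finset.card_sigma, Finset.card_univ, Fintype.card_fin, Nat.cast_sum]
    exact_mod_cast hreal
  calc (p : ℕ∞) ≤ (F.card : ℕ∞) := by exact_mod_cast hF
    _ = (F : Set (Σ i : c.support, Fin ⌈p * c i⌉₊)).encard := (encard_coe_eq_coe_finsetCard F).symm
    _ ≤ _ := encard_le_encard fun q hq => by simpa [F, T] using hq

theorem EnlargementBound.content_le_linearCombination {Z ι : Type*} [EMetricSpace Z]
    {h : ℝ≥0 → ℝ≥0∞} {C δ₀ : ℝ≥0} (hE : EnlargementBound Z h C δ₀) {U : ι → Set Z}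
    (hU : ∀ i, Metric.ediam (U i) ≤ δ₀) {c : ι →₀ ℝ≥0} {A : Set Z}
    (hA : ∀ x ∈ A, 1 ≤ Finsupp.linearCombination ℝ≥0 (fun i => (U i).indicator (1 : Z → ℝ≥0) x) c) :
    content h (6 * δ₀) A ≤
      2 * C * Finsupp.linearCombination ℝ≥0 (fun i => gaugeDiam h (U i)) c := by
  refine le_of_forall_natCast_mul_le_add (e := 2 * C * ∑ i : c.support, gaugeDiam h (U i))
    (ENNReal.mul_ne_top (ENNReal.mul_ne_top ENNReal.ofNat_ne_top ENNReal.coe_ne_top)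
      (ENNReal.sum_ne_top.2 fun i _ => hE.gaugeDiam_ne_top (hU i))) fun p => ?_
  have hceil : ∀ i, (⌈p * c i⌉₊ : ℝ≥0∞) ≤ p * c i + 1 := fun i => by
    exact_mod_cast (Nat.ceil_lt_add_one (a := (p : ℝ≥0) * c i) zero_le).le
  calc p * content h (6 * δ₀) A
      ≤ 2 * C * ∑' q : (univ : Set (Σ i : c.support, Fin ⌈p * c i⌉₊)), gaugeDiam h (U q.1.1) :=
        hE.mul_content_le_of_le_encard (fun q : Σ i : c.support, Fin ⌈p * c i⌉₊ => U q.1) le_rfl A p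
          univ (fun q _ => hU q.1) fun x hx => le_encard_sigma_ceil U c (hA x hx) p
    _ = 2 * C * ∑ i : c.support, ⌈p * c i⌉₊ * gaugeDiam h (U i) := by
        rw [tsum_univ fun q : Σ i : c.support, Fin ⌈p * c i⌉₊ => gaugeDiam h (U q.1), tsum_fintype,
          Fintype.sum_sigma]
        simp
    _ ≤ 2 * C * ∑ i : c.support, (p * c i + 1) * gaugeDiam h (U i) := by
        gcongr with i
        exact hceil i
    _ = p * (2 * C * Finsupp.linearCombination ℝ≥0 (fun i => gaugeDiam h (U i)) c) +
          2 * C * ∑ i : c.support, gaugeDiam h (U i) := by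
        rw [Finsupp.linearCombination_apply, Finsupp.sum, ← Finset.sum_coe_sort c.support]
        simp only [add_mul, one_mul, Finset.sum_add_distrib, mul_add, mul_assoc, Finset.mul_sum,
          ENNReal.smul_def, smul_eq_mul]
        simp only [mul_left_comm]

end WeightedCovers

section Minimax

variable {ι X : Type*} [TopologicalSpace X]

/-- The cone of continuous functions on which a functional with `1 ↦ 1` must be nonnegative in
order to be positive and at most `r i` at every function below `φ i`. -/
def coveringCone (φ : ι → X → ℝ≥0) (r : ι → ℝ≥0) : PointedCone ℝ C(X, ℝ) where
  carrier := {F | ∃ c : ι →₀ ℝ≥0, ∀ x, (Finsupp.linearCombination ℝ≥0 r c : ℝ) ≤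
    F x + Finsupp.linearCombination ℝ≥0 (fun i => φ i x) c}
  add_mem' := by
    rintro F F' ⟨c, hc⟩ ⟨c', hc'⟩
    refine ⟨c + c', fun x => ?_⟩
    simp only [map_add, NNReal.coe_add, ContinuousMap.add_apply]
    linarith [hc x, hc' x]
  zero_mem' := ⟨0, by simp⟩
  smul_mem' := by
    rintro ⟨a, ha⟩ F ⟨c, hc⟩
    refine ⟨Real.toNNReal a • c, fun x => ?_⟩
    have hmul := mul_le_mul_of_nonneg_left (hc x) ha
    rw [mul_add] at hmul
    rw [map_smul, map_smul, smul_eq_mul, smul_eq_mul, NNReal.coe_mul, NNReal.coe_mul,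
      Real.coe_toNNReal a ha]
    exact hmul

theorem nonneg_of_smul_one_mem_coveringCone {φ : ι → X → ℝ≥0} {r : ι → ℝ≥0}
    (hr : ∀ c : ι →₀ ℝ≥0, (∀ x, 1 ≤ Finsupp.linearCombination ℝ≥0 (fun i => φ i x) c) →
      1 ≤ Finsupp.linearCombination ℝ≥0 r c)
    {a : ℝ} (ha : a • (1 : C(X, ℝ)) ∈ coveringCone φ r) : 0 ≤ a := by
  obtain ⟨c, hc⟩ := ha
  by_contra! hneg
  let t : ℝ≥0 := Finsupp.linearCombination ℝ≥0 r c + Real.toNNReal (-a)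
  have ht : 0 < t := add_pos_of_nonneg_of_pos zero_le (Real.toNNReal_pos.2 (by linarith))
  have hcov : ∀ x, 1 ≤ Finsupp.linearCombination ℝ≥0 (fun i => φ i x) (t⁻¹ • c) := fun x => by
    rw [map_smul, smul_eq_mul, one_le_inv_mul₀ ht, ← NNReal.coe_le_coe]
    have := hc x
    simp only [ContinuousMap.smul_apply, ContinuousMap.one_apply, smul_eq_mul, mul_one] at this
    simp only [t, NNReal.coe_add, Real.coe_toNNReal _ (neg_nonneg.2 hneg.le)]
    linarith
  have hcost := hr _ hcov
  rw [map_smul, smul_eq_mul, one_le_inv_mul₀ ht, ← NNReal.coe_le_coe] at hcost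
  simp only [t, NNReal.coe_add, Real.coe_toNNReal _ (neg_nonneg.2 hneg.le)] at hcost
  linarith

variable [CompactSpace X]

theorem exists_positive_functional_le (φ : ι → X → ℝ≥0) (r : ι → ℝ≥0)
    (hr : ∀ c : ι →₀ ℝ≥0, (∀ x, 1 ≤ Finsupp.linearCombination ℝ≥0 (fun i => φ i x) c) →
      1 ≤ Finsupp.linearCombination ℝ≥0 r c) :
    ∃ g : C(X, ℝ) →ₗ[ℝ] ℝ, g 1 = 1 ∧ (∀ F, 0 ≤ F → 0 ≤ g F) ∧
      ∀ i (F : C(X, ℝ)), (∀ x, F x ≤ φ i x) → g F ≤ r i := by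
  have hX : Nonempty X := by
    by_contra! hX
    simpa using hr 0 isEmptyElim
  have hmem : ∀ (c : ℝ) (hc : c • (1 : C(X, ℝ)) ∈ _),
      LinearPMap.mkSpanSingleton (1 : C(X, ℝ)) (1 : ℝ) one_ne_zero ⟨c • 1, hc⟩ = c := fun c hc =>
    (LinearPMap.mkSpanSingleton'_apply (σ := .id ℝ) _ _ _ c hc).trans (mul_one c)
  obtain ⟨g, hg, hgpos⟩ := riesz_extension (coveringCone φ r)
    (LinearPMap.mkSpanSingleton (1 : C(X, ℝ)) (1 : ℝ) one_ne_zero)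
    (by
      rintro ⟨F, hF⟩ hFcone
      obtain ⟨a, rfl⟩ := Submodule.mem_span_singleton.1 hF
      rw [hmem]
      exact nonneg_of_smul_one_mem_coveringCone hr hFcone)
    (fun F => ⟨⟨‖F‖ • 1, Submodule.mem_span_singleton.2 ⟨_, rfl⟩⟩, 0, fun x => by
      simpa [add_comm] using neg_le_iff_add_nonneg.1 (F.neg_norm_le_apply x)⟩)
  have hone : g 1 = 1 := by
    simpa only [one_smul, hmem] using
      (hg ⟨(1 : ℝ) • 1, Submodule.mem_span_singleton.2 ⟨1, rfl⟩⟩).trans (hmem 1 _)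
  refine ⟨g, hone, fun F hF => hgpos F ⟨0, fun x => by simpa using hF x⟩, fun i F hF => ?_⟩
  have hmem := hgpos ((r i : ℝ) • 1 - F) ⟨Finsupp.single i 1, fun x => by
    simpa using (by linarith [hF x] : (r i : ℝ) ≤ r i - F x + φ i x)⟩
  rw [map_sub, map_smul, hone, smul_eq_mul, mul_one] at hmem
  exact sub_nonneg.1 hmem

variable [T2Space X] [MeasurableSpace X] [BorelSpace X]

theorem exists_measure_integral_eq (g : C(X, ℝ) →ₗ[ℝ] ℝ) (hg : ∀ F, 0 ≤ F → 0 ≤ g F) :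
    ∃ μ : Measure X, IsFiniteMeasure μ ∧ μ.Regular ∧ ∀ F : C(X, ℝ), ∫ x, F x ∂μ = g F := by
  let Λ : CompactlySupportedContinuousMap X ℝ →ₚ[ℝ] ℝ :=
    { toFun := fun F => g F.toContinuousMap
      map_add' := fun F F' => map_add g F.toContinuousMap F'.toContinuousMap
      map_smul' := fun a F => map_smul g a F.toContinuousMap
      monotone' := fun F F' hFF' => by
        have hsub := hg (F'.toContinuousMap - F.toContinuousMap) fun x => sub_nonneg.2 (hFF' x)
        rwa [map_sub, sub_nonneg] at hsub }
  exact ⟨RealRMK.rieszMeasure Λ, inferInstance, inferInstance, fun F =>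
    RealRMK.integral_rieszMeasure Λ (CompactlySupportedContinuousMap.continuousMapEquiv F)⟩

theorem measure_isOpen_le_of_forall_integral_le {μ : Measure X} [IsFiniteMeasure μ] [μ.Regular]
    {V : Set X} (hV : IsOpen V) {r : ℝ}
    (hr : ∀ F : C(X, ℝ), (∀ x, F x ≤ V.indicator 1 x) → ∫ x, F x ∂μ ≤ r) :
    μ V ≤ ENNReal.ofReal r := by
  rw [hV.measure_eq_iSup_isCompact]
  refine iSup₂_le fun K hKV => iSup_le fun hK => ?_
  obtain ⟨F, hF0, hF1, hF⟩ := exists_continuous_zero_one_of_isClosed hV.isClosed_compl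
    hK.isClosed (disjoint_left.2 fun x hx hxK => hx (hKV hxK))
  have hFV : ∀ x, F x ≤ V.indicator 1 x := fun x => by
    by_cases hx : x ∈ V
    · simpa [hx] using (hF x).2
    · simpa [hx] using (hF0 hx).le
  calc μ K = ∫⁻ x in K, ENNReal.ofReal (F x) ∂μ := by
        rw [setLIntegral_congr_fun hK.measurableSet fun x hx => by rw [hF1 hx]]
        simp
    _ ≤ ∫⁻ x, ENNReal.ofReal (F x) ∂μ := setLIntegral_le_lintegral _ _
    _ = ENNReal.ofReal (∫ x, F x ∂μ) := (ofReal_integral_eq_lintegral_ofReal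
        (F.continuous.integrable_of_hasCompactSupport (.of_compactSpace _))
        (.of_forall fun x => (hF x).1)).symm
    _ ≤ ENNReal.ofReal r := ENNReal.ofReal_le_ofReal (hr F hFV)

theorem exists_isProbabilityMeasure_measure_le {U : ι → Set X} (hU : ∀ i, IsOpen (U i))
    (r : ι → ℝ≥0)
    (hr : ∀ c : ι →₀ ℝ≥0,
      (∀ x, 1 ≤ Finsupp.linearCombination ℝ≥0 (fun i => (U i).indicator (1 : X → ℝ≥0) x) c) →
        1 ≤ Finsupp.linearCombination ℝ≥0 r c) :
    ∃ μ : Measure X, IsProbabilityMeasure μ ∧ ∀ i, μ (U i) ≤ r i := by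
  obtain ⟨g, hg1, hgpos, hgr⟩ := exists_positive_functional_le (fun i => (U i).indicator 1) r hr
  obtain ⟨μ, hfin, hreg, hμ⟩ := exists_measure_integral_eq g hgpos
  refine ⟨μ, ⟨?_⟩, fun i => ?_⟩
  · have hone := (hμ 1).trans hg1
    simp only [ContinuousMap.one_apply, integral_const, smul_eq_mul, mul_one] at hone
    exact (ENNReal.toReal_eq_one_iff _).1 hone
  · rw [← ENNReal.ofReal_coe_nnreal]
    refine measure_isOpen_le_of_forall_integral_le (hU i) fun F hF => hμ F ▸ hgr i F fun x => ?_
    refine (hF x).trans_eq ?_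
    by_cases hx : x ∈ U i <;> simp [hx]

end Minimax

theorem IsGauge.measure_le_gaugeDiam_of_isOpen {Z : Type*} [EMetricSpace Z] [MeasurableSpace Z]
    {h : ℝ≥0 → ℝ≥0∞} (hg : IsGauge h) (ν : Measure Z) {δ : ℝ≥0∞}
    (hν : ∀ V, IsOpen V → Metric.ediam V ≤ δ → ν V ≤ gaugeDiam h V) {A : Set Z}
    (hA : Metric.ediam A < δ) : ν A ≤ gaugeDiam h A := by
  refine ENNReal.le_of_forall_pos_le_add fun ε hε _ => ?_
  obtain ⟨V, hV, hAV, hVd, hVε⟩ := hg.exists_open_superset (ne_top_of_lt hA)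
    (tsub_pos_of_lt hA) (ENNReal.coe_pos.2 hε)
  rw [add_tsub_cancel_of_le hA.le] at hVd
  exact (measure_mono hAV).trans ((hν V hV hVd).trans hVε)

theorem EnlargementBound.exists_isProbabilityMeasure_mul_le {Z : Type*} [EMetricSpace Z]
    [MeasurableSpace Z] [BorelSpace Z] {h : ℝ≥0 → ℝ≥0∞} {C δ₀ : ℝ≥0}
    (hE : EnlargementBound Z h C δ₀) {K : Set Z} (hK : IsCompact K) (hpos : 0 < hausdorffM h K) :
    ∃ (κ : ℝ≥0) (μ : Measure K), 0 < κ ∧ IsProbabilityMeasure μ ∧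
      ∀ V, IsOpen V → Metric.ediam V ≤ δ₀ → κ * μ (Subtype.val ⁻¹' V) ≤ gaugeDiam h V := by
  have : CompactSpace K := isCompact_iff_compactSpace.1 hK
  have hcontent : content h (6 * δ₀) K ≠ 0 := fun h0 =>
    hpos.ne' (hE.gauge.hausdorffM_eq_zero_of_content_eq_zero (by finiteness) h0)
  obtain ⟨κ, hκ0, hκ⟩ := ENNReal.lt_iff_exists_nnreal_btwn.1
    (ENNReal.div_pos hcontent (b := 2 * C) (by finiteness))
  have hκ0 : 0 < κ := ENNReal.coe_pos.1 hκ0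
  let ι := {V : Set Z // IsOpen V ∧ Metric.ediam V ≤ δ₀}
  let r : ι → ℝ≥0 := fun i => κ⁻¹ * (gaugeDiam h i.1).toNNReal
  have hr : ∀ i, κ * (r i : ℝ≥0∞) = gaugeDiam h i.1 := fun i => by
    rw [← ENNReal.coe_mul, mul_inv_cancel_left₀ hκ0.ne',
      ENNReal.coe_toNNReal (hE.gaugeDiam_ne_top i.2.2)]
  have hcost : ∀ c : ι →₀ ℝ≥0,
      κ * (Finsupp.linearCombination ℝ≥0 r c : ℝ≥0∞) =
        Finsupp.linearCombination ℝ≥0 (fun i : ι => gaugeDiam h i.1) c := fun c => by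
    simp only [Finsupp.linearCombination_apply, Finsupp.sum, ENNReal.ofNNReal_finsetSum,
      Finset.mul_sum, smul_eq_mul, ENNReal.coe_mul, ENNReal.smul_def, ← hr, mul_left_comm]
  obtain ⟨μ, hμ, hμr⟩ := exists_isProbabilityMeasure_measure_le
    (U := fun i : ι => ((↑) : K → Z) ⁻¹' i.1) (fun i => i.2.1.preimage continuous_subtype_val) r
    fun c hc => by
      have hle := hκ.le.trans (ENNReal.div_le_of_le_mul' (hE.content_le_linearCombination
        (A := K) (U := fun i : ι => i.1) (fun i => i.2.2) (c := c) fun x hx => hc ⟨x, hx⟩))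
      rw [← hcost, ← ENNReal.coe_mul, ENNReal.coe_le_coe] at hle
      exact le_of_mul_le_mul_left ((mul_one κ).trans_le hle) hκ0
  exact ⟨κ, μ, hκ0, hμ, fun V hV hVd =>
    (mul_le_mul_right (hμr ⟨V, hV, hVd⟩) _).trans_eq (hr ⟨V, hV, hVd⟩)⟩

theorem EnlargementBound.exists_frostman_measure {Z : Type*} [EMetricSpace Z] [MeasurableSpace Z]
    [BorelSpace Z] {h : ℝ≥0 → ℝ≥0∞} {C δ₀ : ℝ≥0} (hE : EnlargementBound Z h C δ₀) {K : Set Z}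
    (hK : IsCompact K) (hpos : 0 < hausdorffM h K) :
    ∃ ν : Measure Z, IsFiniteMeasure ν ∧ ν Kᶜ = 0 ∧ 0 < ν univ ∧
      ∀ A, Metric.ediam A < δ₀ → ν A ≤ gaugeDiam h A := by
  obtain ⟨κ, μ, hκ0, hμ, hopen⟩ := hE.exists_isProbabilityMeasure_mul_le hK hpos
  refine ⟨κ • μ.map Subtype.val, inferInstance, ?_, ?_, fun A hA => ?_⟩
  · rw [Measure.smul_apply, Measure.map_apply measurable_subtype_coe hK.measurableSet.compl]
    simp
  · rw [Measure.smul_apply, Measure.map_apply measurable_subtype_coe .univ]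
    simpa
  · refine hE.gauge.measure_le_gaugeDiam_of_isOpen _ (fun V hV hVd => ?_) hA
    rw [Measure.smul_apply, Measure.map_apply measurable_subtype_coe hV.measurableSet]
    exact hopen V hV hVd

section Density

variable {Z : Type*} [EMetricSpace Z] [MeasurableSpace Z] {h : ℝ≥0 → ℝ≥0∞} {C δ₀ : ℝ≥0}

/-- The points whose small open neighbourhoods `U` all have `h`-density `ν U / h (diam U)` at most
`1 / k`; small means of diameter at most `1 / (n + 1)`. -/
def lowDensity (h : ℝ≥0 → ℝ≥0∞) (ν : Measure Z) (k n : ℕ) : Set Z :=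
  {x | ∀ U, IsOpen U → x ∈ U → Metric.ediam U ≤ (1 / (n + 1) : ℝ≥0) → k * ν U ≤ gaugeDiam h U}

/-- `l A = o(h (diam A))` as `diam A → 0`, uniformly in `A`. -/
def IsLittleOGauge (h : ℝ≥0 → ℝ≥0∞) (l : Measure Z) : Prop :=
  ∀ M : ℕ, ∃ r : ℝ≥0, 0 < r ∧ ∀ A, Metric.ediam A ≤ r → M * l A ≤ gaugeDiam h A

theorem isClosed_lowDensity (ν : Measure Z) (k n : ℕ) : IsClosed (lowDensity h ν k n) := by
  have hcompl : (lowDensity h ν k n)ᶜ = ⋃₀ {U | IsOpen U ∧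
      Metric.ediam U ≤ (1 / (n + 1) : ℝ≥0) ∧ gaugeDiam h U < k * ν U} := by
    ext x
    simp only [lowDensity, mem_compl_iff, mem_ofPred_eq, not_forall, not_le, mem_sUnion]
    tauto
  rw [← isOpen_compl_iff, hcompl]
  exact isOpen_sUnion fun U hU => hU.1

theorem monotone_lowDensity (ν : Measure Z) (k : ℕ) : Monotone (lowDensity h ν k) := by
  intro m n hmn x hx U hU hxU hUn
  have hle : (1 / (n + 1) : ℝ≥0) ≤ 1 / (m + 1) := by gcongr
  exact hx U hU hxU (hUn.trans (by exact_mod_cast hle))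

theorem measure_le_hausdorffM {ν : Measure Z} {δ : ℝ≥0∞} (hδ : 0 < δ)
    (hν : ∀ A, Metric.ediam A ≤ δ → ν A ≤ gaugeDiam h A) (A : Set Z) : ν A ≤ hausdorffM h A :=
  (OuterMeasure.mkMetric'.le_pre.2 hν A : ν A ≤ content h δ A).trans (content_le_hausdorffM hδ A)

variable [BorelSpace Z]

theorem EnlargementBound.content_le_of_forall_exists_isOpen [SecondCountableTopology Z]
    (hE : EnlargementBound Z h C δ₀) (ν : Measure Z) (k : ℝ≥0∞) {F : Set Z} {δ : ℝ≥0} (hδ : δ ≤ δ₀)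
    (hF : ∀ x ∈ F, ∃ U, IsOpen U ∧ x ∈ U ∧ Metric.ediam U ≤ δ ∧ gaugeDiam h U ≤ k * ν U) :
    content h (6 * δ) F ≤ 2 * C * (k * ν univ) := by
  choose U hUo hxU hUδ hUk using fun x : F => hF x x.2
  obtain ⟨T, hT, hTU⟩ := TopologicalSpace.isOpen_iUnion_countable U hUo
  have := hT.to_subtype
  obtain ⟨J, -, hJ, hle⟩ := hE.exists_disjoint_content_biUnion_le (fun i : T => U i) univ hδ
    fun i _ => hUδ i
  have hcover : F ⊆ ⋃ i ∈ (univ : Set T), U i := by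
    rw [biUnion_univ, iUnion_coe_set, hTU]
    exact fun x hx => mem_iUnion.2 ⟨⟨x, hx⟩, hxU _⟩
  refine (measure_mono hcover).trans (hle.trans ?_)
  gcongr
  calc ∑' j : J, gaugeDiam h (U j) ≤ ∑' j : J, k * ν (U j) := ENNReal.tsum_le_tsum fun j => hUk j
    _ = k * ν (⋃ j ∈ J, U j) := by
      rw [ENNReal.tsum_mul_left, measure_biUnion (to_countable J) hJ fun j _ =>
        (hUo j).measurableSet]
    _ ≤ k * ν univ := by gcongr; exact subset_univ _

theorem EnlargementBound.hausdorffM_le_of_forall_exists_isOpen [SecondCountableTopology Z]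
    (hE : EnlargementBound Z h C δ₀) (ν : Measure Z) (k : ℝ≥0∞) {F : Set Z}
    (hF : ∀ x ∈ F, ∀ r : ℝ≥0, 0 < r →
      ∃ U, IsOpen U ∧ x ∈ U ∧ Metric.ediam U ≤ r ∧ gaugeDiam h U ≤ k * ν U) :
    hausdorffM h F ≤ 2 * C * (k * ν univ) := by
  have hlim : Tendsto (fun n : ℕ => 6 * δ₀ * (1 / ((n : ℝ≥0) + 1))) atTop (𝓝 0) := by
    simpa using (tendsto_one_div_add_atTop_nhds_zero_nat (𝕜 := ℝ≥0)).const_mul (6 * δ₀)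
  refine hausdorffM_le_of_content_le (ENNReal.tendsto_coe.2 hlim) fun n => ?_
  have hn : δ₀ * (1 / ((n : ℝ≥0) + 1)) ≤ δ₀ :=
    mul_le_of_le_one_right zero_le (div_le_self zero_le (by simp))
  have hpos : 0 < δ₀ * (1 / ((n : ℝ≥0) + 1)) := mul_pos hE.pos (by positivity)
  rw [mul_assoc, ENNReal.coe_mul]
  exact hE.content_le_of_forall_exists_isOpen ν k hn fun x hx => hF x hx _ hpos

theorem EnlargementBound.hausdorffM_lt_top_of_disjoint_lowDensity [SecondCountableTopology Z]
    (hE : EnlargementBound Z h C δ₀) (ν : Measure Z) [IsFiniteMeasure ν] (k : ℕ) {F : Set Z}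
    (hF : Disjoint F (⋃ n, lowDensity h ν k n)) : hausdorffM h F < ⊤ := by
  refine (hE.hausdorffM_le_of_forall_exists_isOpen ν k fun x hx r hr => ?_).trans_lt
    (by finiteness : 2 * (C : ℝ≥0∞) * (k * ν univ) < ⊤)
  obtain ⟨n, hn⟩ := exists_nat_one_div_lt (K := ℝ≥0) hr
  have hxn : x ∉ lowDensity h ν k n := fun hxn => hF.notMem_of_mem_left hx (mem_iUnion.2 ⟨n, hxn⟩)
  simp only [lowDensity, mem_ofPred_eq, not_forall, not_le] at hxn
  obtain ⟨U, hU, hxU, hUn, hUk⟩ := hxn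
  exact ⟨U, hU, hxU, hUn.trans (by exact_mod_cast hn.le), hUk.le⟩

theorem IsGauge.isLittleOGauge_restrict (hg : IsGauge h) (ν : Measure Z) {L : Set Z} {n : ℕ → ℕ}
    (hL : L ⊆ ⋂ k, lowDensity h ν k (n k)) : IsLittleOGauge h (ν.restrict L) := by
  intro M
  have hpos : (0 : ℝ≥0) < 1 / (n M + 1) := by positivity
  refine ⟨1 / (n M + 1) / 2, half_pos hpos, fun A hA => ?_⟩
  rw [← smul_eq_mul, ← Measure.smul_apply]
  refine hg.measure_le_gaugeDiam_of_isOpen (δ := (1 / (n M + 1) : ℝ≥0)) _ (fun V hV hVd => ?_)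
    (hA.trans_lt (by exact_mod_cast half_lt_self hpos))
  rw [Measure.smul_apply, smul_eq_mul, Measure.restrict_apply hV.measurableSet]
  rcases (V ∩ L).eq_empty_or_nonempty with hVL | ⟨x, hxV, hxL⟩
  · simp [hVL]
  · calc M * ν (V ∩ L) ≤ M * ν V := by gcongr; exact inter_subset_left
      _ ≤ gaugeDiam h V := mem_iInter.1 (hL hxL) M V hV hxV hVd

end Density

section Dichotomy

theorem exists_measure_inter_iInter_pos {X : Type*} [MeasurableSpace X] {ν : Measure X}
    [IsFiniteMeasure ν] {K : Set X} (hK : MeasurableSet K) (hpos : 0 < ν K) {S : ℕ → ℕ → Set X}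
    (hS : ∀ k n, MeasurableSet (S k n)) (hmono : ∀ k, Monotone (S k))
    (hnull : ∀ k, ν (K \ ⋃ n, S k n) = 0) : ∃ n : ℕ → ℕ, 0 < ν (K ∩ ⋂ k, S k (n k)) := by
  obtain ⟨e, he, hesum⟩ := ENNReal.exists_pos_sum_of_countable' hpos.ne' ℕ
  have hsmall : ∀ k, ∃ n, ν (K \ S k n) < e k := fun k => by
    have hlim := tendsto_measure_iInter_atTop (μ := ν)
      (fun n => (hK.diff (hS k n)).nullMeasurableSet)
      (fun m n hmn => sdiff_subset_sdiff_right (hmono k hmn)) ⟨0, measure_ne_top _ _⟩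
    rw [← sdiff_iUnion, hnull k] at hlim
    exact (hlim.eventually (gt_mem_nhds (he k))).exists
  choose n hn using hsmall
  refine ⟨n, pos_iff_ne_zero.2 fun hzero => hesum.not_ge ?_⟩
  calc ν K ≤ ν (K ∩ ⋂ k, S k (n k)) + ν (⋃ k, K \ S k (n k)) := by
        rw [← sdiff_iInter]
        exact measure_le_inter_add_sdiff ν _ _
    _ ≤ ∑' k, ν (K \ S k (n k)) := by
        rw [hzero, zero_add]
        exact measure_iUnion_le _
    _ ≤ ∑' k, e k := ENNReal.tsum_le_tsum fun k => (hn k).le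

variable {Z : Type*} [EMetricSpace Z] [SecondCountableTopology Z] [MeasurableSpace Z] [BorelSpace Z]
  {h : ℝ≥0 → ℝ≥0∞} {C δ₀ : ℝ≥0}

theorem EnlargementBound.exists_isCompact_finite_or_isLittleOGauge
    (hE : EnlargementBound Z h C δ₀) {K : Set Z} (hK : IsCompact K) (hpos : 0 < hausdorffM h K) :
    (∃ F ⊆ K, IsCompact F ∧ 0 < hausdorffM h F ∧ hausdorffM h F < ⊤) ∨
      ∃ L ⊆ K, IsCompact L ∧
        ∃ l : Measure Z, IsFiniteMeasure l ∧ IsLittleOGauge h l ∧ 0 < l L := by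
  obtain ⟨ν, hfin, hνK, hνpos, hν⟩ := hE.exists_frostman_measure hK hpos
  rw [← measure_add_measure_compl hK.measurableSet, hνK, add_zero] at hνpos
  by_cases hnull : ∀ k : ℕ, ν (K \ ⋃ n, lowDensity h ν k n) = 0
  · right
    obtain ⟨n, hn⟩ := exists_measure_inter_iInter_pos hK.measurableSet hνpos
      (fun k n => (isClosed_lowDensity ν k n).measurableSet) (monotone_lowDensity ν) hnull
    set L := K ∩ ⋂ k, lowDensity h ν k (n k)
    refine ⟨L, inter_subset_left, hK.inter_right (isClosed_iInter fun k =>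
      isClosed_lowDensity ν k (n k)), ν.restrict L, inferInstance,
      hE.gauge.isLittleOGauge_restrict ν inter_subset_right, ?_⟩
    rwa [Measure.restrict_apply_self]
  · left
    obtain ⟨k, hk⟩ := not_forall.1 hnull
    obtain ⟨F, hF, hFclosed, hFpos⟩ := (hK.measurableSet.diff (.iUnion fun n =>
      (isClosed_lowDensity ν k n).measurableSet)).exists_lt_isClosed_of_ne_top
      (measure_ne_top ν _) (pos_iff_ne_zero.2 hk)
    have hhalf : ∀ A, Metric.ediam A ≤ (δ₀ / 2 : ℝ≥0) → ν A ≤ gaugeDiam h A := fun A hA =>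
      hν A (hA.trans_lt (by exact_mod_cast half_lt_self hE.pos))
    exact ⟨F, hF.trans sdiff_subset, hK.of_isClosed_subset hFclosed (hF.trans sdiff_subset),
      hFpos.trans_le (measure_le_hausdorffM (by exact_mod_cast half_pos hE.pos) hhalf F),
      hE.hausdorffM_lt_top_of_disjoint_lowDensity ν k (disjoint_sdiff_left.mono_left hF)⟩

end Dichotomy

section Halving

theorem continuous_measureReal_Iic (μ : Measure ℝ) [IsFiniteMeasure μ] [NullSingletonClass μ] :
    Continuous fun t => μ.real (Iic t) := by
  have hprim : Continuous fun t : ℝ => ∫ _ in (0 : ℝ)..t, (1 : ℝ) ∂μ :=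
    intervalIntegral.continuous_primitive (fun _ _ => intervalIntegrable_const) 0
  refine (hprim.add_const (μ.real (Iic 0))).congr fun t => ?_
  rw [← intervalIntegral.integral_Iic_sub_Iic (integrable_const _).integrableOn
    (integrable_const _).integrableOn]
  simp

theorem exists_measure_Iic_eq (μ : Measure ℝ) [IsFiniteMeasure μ] [NullSingletonClass μ]
    {c : ℝ≥0∞} (hc : 0 < c) (hcμ : c < μ univ) : ∃ t, μ (Iic t) = c := by
  obtain ⟨b, hb⟩ := ((tendsto_measure_Iic_atTop μ).eventually (lt_mem_nhds hcμ)).exists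
  obtain ⟨a, ha⟩ := ((tendsto_measure_Ici_atBot μ).eventually
    (lt_mem_nhds (ENNReal.sub_lt_self (measure_ne_top μ _) (hc.trans hcμ).ne' hc.ne'))).exists
  have hac : μ (Iic a) ≤ c := by
    rw [← measure_congr Iio_ae_eq_Iic, ← compl_Ici, measure_compl measurableSet_Ici
      (measure_ne_top μ _), tsub_le_iff_right, add_comm, ← tsub_le_iff_right]
    exact ha.le
  obtain ⟨t, ht⟩ := mem_range_of_exists_le_of_exists_ge (continuous_measureReal_Iic μ)
    ⟨a, ENNReal.toReal_mono hcμ.ne_top hac⟩ ⟨b, ENNReal.toReal_mono (measure_ne_top μ _) hb.le⟩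
  exact ⟨t, (ENNReal.toReal_eq_toReal_iff' (measure_ne_top μ _) hcμ.ne_top).1 ht⟩

theorem exists_measurableSet_subset_measure_eq {Z : Type*} [MeasurableSpace Z]
    [StandardBorelSpace Z] (l : Measure Z) [IsFiniteMeasure l] [NullSingletonClass l] {E : Set Z}
    (hE : MeasurableSet E) {c : ℝ≥0∞} (hc : c ≤ l E) : ∃ F ⊆ E, MeasurableSet F ∧ l F = c := by
  rcases eq_zero_or_pos c with rfl | hpos
  · exact ⟨∅, empty_subset E, .empty, measure_empty⟩
  rcases hc.eq_or_lt with rfl | hlt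
  · exact ⟨E, Subset.rfl, hE, rfl⟩
  obtain ⟨φ, hφ⟩ := exists_measurableEmbedding_real Z
  have hnull : NullSingletonClass ((l.restrict E).map φ) := ⟨fun x => by
    rw [hφ.map_apply]
    exact (subsingleton_singleton.preimage hφ.injective).measure_zero _⟩
  obtain ⟨t, ht⟩ := exists_measure_Iic_eq ((l.restrict E).map φ) hpos (by simpa [hφ.map_apply])
  rw [hφ.map_apply, Measure.restrict_apply (hφ.measurable measurableSet_Iic)] at ht
  exact ⟨_, inter_subset_right, (hφ.measurable measurableSet_Iic).inter hE, ht⟩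

theorem exists_measurableSet_halving_of_partition {Z ι : Type*} [Countable ι] [MeasurableSpace Z]
    [StandardBorelSpace Z] (l : Measure Z) [IsFiniteMeasure l] [NullSingletonClass l]
    {P : ι → Set Z} (hP : ∀ i, MeasurableSet (P i)) (hdisj : Pairwise (Function.onFun Disjoint P))
    {K : Set Z} (hK : MeasurableSet K) :
    ∃ G ⊆ K, MeasurableSet G ∧
      ∀ I : Set ι, 2 * l (G ∩ ⋃ i ∈ I, P i) = l (K ∩ ⋃ i ∈ I, P i) := by
  choose F hFsub hF hFhalf using fun i =>
    exists_measurableSet_subset_measure_eq l (hK.inter (hP i)) ENNReal.half_le_self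
  refine ⟨⋃ i, F i, iUnion_subset fun i => (hFsub i).trans inter_subset_left, .iUnion hF,
    fun I => ?_⟩
  have hFP : ∀ i, (⋃ j, F j) ∩ P i = F i := fun i => by
    refine Subset.antisymm ?_ fun x hx => ⟨mem_iUnion.2 ⟨i, hx⟩, (hFsub i hx).2⟩
    rintro x ⟨hx, hxi⟩
    obtain ⟨j, hj⟩ := mem_iUnion.1 hx
    by_contra hxF
    exact (hdisj fun hij : i = j => hxF (hij ▸ hj)).le_bot ⟨hxi, (hFsub j hj).2⟩
  have hsum : ∀ {A : Set Z}, MeasurableSet A →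
      l (A ∩ ⋃ i ∈ I, P i) = ∑' i : I, l (A ∩ P i) := fun {A} hA => by
    rw [inter_iUnion₂]
    exact measure_biUnion (to_countable I)
      (fun i _ j _ hij => (hdisj hij).mono inter_subset_right inter_subset_right)
      fun i _ => hA.inter (hP i)
  simp_rw [hsum (.iUnion hF), hsum hK, hFP, hFhalf, ← ENNReal.tsum_mul_left,
    ENNReal.mul_div_cancel two_ne_zero ENNReal.ofNat_ne_top]

end Halving

section Step

variable {h : ℝ≥0 → ℝ≥0∞}

theorem IsLittleOGauge.nullSingletonClass {Z : Type*} [EMetricSpace Z] [MeasurableSpace Z]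
    {l : Measure Z} (hg : IsGauge h) (hl : IsLittleOGauge h l) : NullSingletonClass l where
  measure_singleton x := by
    obtain ⟨r, -, hle⟩ := hl 1
    simpa [gaugeDiam, hg.map_zero] using hle {x} (by simp)

theorem IsLittleOGauge.nsmul {Z : Type*} [EMetricSpace Z] [MeasurableSpace Z] {l : Measure Z}
    (hl : IsLittleOGauge h l) (n : ℕ) : IsLittleOGauge h (n • l) := fun M => by
  obtain ⟨r, hr, hle⟩ := hl (M * n)
  refine ⟨r, hr, fun A hA => ?_⟩
  simpa [mul_assoc] using hle A hA

theorem IsGauge.eventually_forall_mul_le (hg : IsGauge h) {D D' r R : ℝ≥0} (hD : D < D')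
    (hr : 0 < r) (hR : h R < ⊤) :
    ∀ᶠ η in 𝓝 (0 : ℝ≥0), ∀ d ∈ Icc r R, D * h (d + 2 * η) ≤ D' * h d := by
  refine isCompact_Icc.eventually_forall_of_forall_eventually fun d hd => ?_
  have hleft : Continuous fun z : ℝ≥0 × ℝ≥0 => (D : ℝ≥0∞) * h (z.2 + 2 * z.1) :=
    (ENNReal.continuous_const_mul ENNReal.coe_ne_top).comp (hg.continuous.comp (by fun_prop))
  have hright : Continuous fun z : ℝ≥0 × ℝ≥0 => (D' : ℝ≥0∞) * h z.2 :=
    (ENNReal.continuous_const_mul ENNReal.coe_ne_top).comp (hg.continuous.comp (by fun_prop))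
  have hlt : (D : ℝ≥0∞) * h (d + 2 * 0) < D' * h d := by
    rw [mul_zero, add_zero]
    exact (ENNReal.mul_lt_mul_iff_left (hg.pos d (hr.trans_le hd.1)).ne'
      ((hg.mono hd.2).trans_lt hR).ne).2 (by exact_mod_cast hD)
  filter_upwards [(isOpen_lt hleft hright).mem_nhds (x := (0, d)) hlt] with z hz using hz.le

theorem ediam_biUnion_inter_nonempty_le {Z ι : Type*} [PseudoEMetricSpace Z] {P : ι → Set Z}
    {η : ℝ≥0} (hP : ∀ i, Metric.ediam (P i) ≤ η) (A : Set Z) :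
    Metric.ediam (⋃ i ∈ {i | (P i ∩ A).Nonempty}, P i) ≤ Metric.ediam A + 2 * η := by
  refine (Metric.ediam_mono (iUnion₂_subset fun i hi x hx => ?_)).trans
    (Metric.ediam_cthickening_le η)
  obtain ⟨y, hyP, hyA⟩ := hi
  refine Metric.mem_cthickening_of_edist_le x y η A hyA ?_
  rw [ENNReal.ofReal_coe_nnreal]
  exact (Metric.edist_le_ediam_of_mem hx hyP).trans (hP i)

theorem exists_measurable_partition_ediam_le (Z : Type*) [MetricSpace Z]
    [TopologicalSpace.SeparableSpace Z] [MeasurableSpace Z] [OpensMeasurableSpace Z] {η : ℝ≥0}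
    (hη : 0 < η) :
    ∃ P : ℕ → Set Z, (∀ n, MeasurableSet (P n)) ∧ (∀ n, Metric.ediam (P n) ≤ η) ∧
      ⋃ n, P n = univ ∧ Pairwise (Function.onFun Disjoint P) := by
  obtain ⟨P, hP, hbdd, hdiam, hunion, hdisj⟩ :=
    SeparableSpace.exists_measurable_partition_diam_le Z (ε := η) (by exact_mod_cast hη)
  refine ⟨P, hP, fun n => ?_, hunion, hdisj⟩
  rw [← ENNReal.ofReal_toReal (hbdd n).ediam_ne_top, ← ENNReal.ofReal_coe_nnreal]
  exact ENNReal.ofReal_le_ofReal (hdiam n)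

variable {Z : Type*} [MetricSpace Z] [PolishSpace Z] [MeasurableSpace Z] [BorelSpace Z]
  {l : Measure Z} [IsFiniteMeasure l] {K : Set Z} {D D' ρ ρ' : ℝ≥0}

theorem IsGauge.exists_measurableSet_halving (hg : IsGauge h) (hl : IsLittleOGauge h l)
    (hK : MeasurableSet K) (hD : D < D') (hD' : 1 ≤ D') (hρ : ρ' < ρ) (hfin : h ρ < ⊤)
    (hbound : ∀ A, Metric.ediam A ≤ ρ → l (A ∩ K) ≤ D * gaugeDiam h A) :
    ∃ G ⊆ K, MeasurableSet G ∧ 2 * l G = l K ∧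
      ∀ A, Metric.ediam A ≤ ρ' → 2 * l (A ∩ G) ≤ D' * gaugeDiam h A := by
  have := hl.nullSingletonClass hg
  obtain ⟨r, hr, hsmall⟩ := hl 2
  have hroom : ∀ᶠ η in 𝓝 (0 : ℝ≥0), ρ' + 2 * η < ρ :=
    Continuous.tendsto' (by fun_prop) 0 ρ' (by simp) |>.eventually (gt_mem_nhds hρ)
  obtain ⟨η, ⟨hηD, hηρ⟩, hη⟩ := ((((hg.eventually_forall_mul_le hD hr
    ((hg.mono hρ.le).trans_lt hfin)).and hroom).filter_mono nhdsWithin_le_nhds).and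
    (self_mem_nhdsWithin (s := Ioi (0 : ℝ≥0)))).exists
  obtain ⟨P, hP, hPη, hPuniv, hPdisj⟩ := exists_measurable_partition_ediam_le Z hη
  obtain ⟨G, hGK, hG, hhalf⟩ := exists_measurableSet_halving_of_partition l hP hPdisj hK
  refine ⟨G, hGK, hG, by simpa [hPuniv] using hhalf univ, fun A hA => ?_⟩
  lift Metric.ediam A to ℝ≥0 using ne_top_of_le_ne_top ENNReal.coe_ne_top hA with d hd
  rcases le_or_gt d r with hdr | hrd
  · calc 2 * l (A ∩ G) ≤ 2 * l A := by gcongr; exact inter_subset_left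
      _ ≤ 1 * gaugeDiam h A := by
        rw [one_mul]
        exact hsmall A (by rw [← hd]; exact_mod_cast hdr)
      _ ≤ D' * gaugeDiam h A := by gcongr; exact_mod_cast hD'
  set B := ⋃ n ∈ {n | (P n ∩ A).Nonempty}, P n
  have hAB : A ⊆ B := fun x hx => by
    obtain ⟨n, hn⟩ := mem_iUnion.1 (hPuniv ▸ mem_univ x)
    exact mem_iUnion₂.2 ⟨n, ⟨x, hn, hx⟩, hn⟩
  have hBd : Metric.ediam B ≤ (d + 2 * η : ℝ≥0) := by
    push_cast
    exact (ediam_biUnion_inter_nonempty_le hPη A).trans_eq (by rw [hd])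
  have hdρ : d ≤ ρ' := by exact_mod_cast hA
  have hBρ : d + 2 * η ≤ ρ := (by gcongr : d + 2 * η ≤ ρ' + 2 * η).trans hηρ.le
  calc 2 * l (A ∩ G) ≤ 2 * l (G ∩ B) := by rw [inter_comm]; gcongr
    _ = l (B ∩ K) := by rw [hhalf, inter_comm]
    _ ≤ D * gaugeDiam h B := hbound B (hBd.trans (by exact_mod_cast hBρ))
    _ ≤ D * h (d + 2 * η) := by gcongr; exact hg.gaugeDiam_le_of_ediam_le hBd
    _ ≤ D' * h d := hηD d ⟨hrd.le, hdρ⟩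
    _ = D' * gaugeDiam h A := by rw [gaugeDiam, ← hd, ENNReal.toNNReal_coe]

theorem IsGauge.exists_isCompact_halving (hg : IsGauge h) (hl : IsLittleOGauge h l)
    (hK : IsCompact K) (hD : D < D') (hD' : 1 ≤ D') (hρ : ρ' < ρ) (hfin : h ρ < ⊤)
    (hbound : ∀ A, Metric.ediam A ≤ ρ → l (A ∩ K) ≤ D * gaugeDiam h A) {a : ℝ≥0∞} (ha : a < l K) :
    ∃ K' ⊆ K, IsCompact K' ∧ a < 2 * l K' ∧ 2 * l K' ≤ l K ∧
      ∀ A, Metric.ediam A ≤ ρ' → 2 * l (A ∩ K') ≤ D' * gaugeDiam h A := by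
  obtain ⟨G, hGK, hG, hhalf, hGbound⟩ :=
    hg.exists_measurableSet_halving hl hK.measurableSet hD hD' hρ hfin hbound
  have hlt : a / 2 < l G := by
    rwa [ENNReal.div_lt_iff (by simp) (by simp), mul_comm, hhalf]
  obtain ⟨K', hK'G, hK'closed, hK'⟩ := hG.exists_lt_isClosed_of_ne_top (measure_ne_top l _) hlt
  refine ⟨K', hK'G.trans hGK, hK.of_isClosed_subset hK'closed (hK'G.trans hGK), ?_, ?_,
    fun A hA => (hGbound A hA).trans' (by gcongr)⟩
  · rwa [ENNReal.div_lt_iff (by simp) (by simp), mul_comm] at hK'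
  · rw [← hhalf]
    gcongr

end Step

section Cantor

variable {Z : Type*} [EMetricSpace Z] [MeasurableSpace Z] {h : ℝ≥0 → ℝ≥0∞}

theorem IsGauge.le_mul_of_content_iInter_lt (hg : IsGauge h) {K : ℕ → Set Z} (hanti : Antitone K)
    (hK : ∀ k, IsCompact (K k)) {μ : ℕ → Measure Z} {a D w : ℝ≥0∞} {δ ρ : ℝ≥0} (hδ : δ < ρ)
    (ha : ∀ k, a ≤ μ k (K k))
    (hμ : ∀ k A, Metric.ediam A ≤ ρ → μ k (A ∩ K k) ≤ D * gaugeDiam h A)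
    (hw : content h δ (⋂ k, K k) < w) : a ≤ D * w := by
  obtain ⟨V, hcover, hVo, hVρ, hVw⟩ :=
    hg.exists_open_cover_of_content_lt (ENNReal.coe_lt_coe.2 hδ) hw
  obtain ⟨k, hk⟩ := exists_subset_nhds_of_isCompact' hanti.directed_ge hK
    (fun k => (hK k).isClosed) fun x hx => (isOpen_iUnion hVo).mem_nhds (hcover hx)
  calc a ≤ μ k (K k) := ha k
    _ = μ k (⋃ i, V i ∩ K k) := by rw [← iUnion_inter, inter_eq_right.2 hk]
    _ ≤ ∑' i, μ k (V i ∩ K k) := measure_iUnion_le _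
    _ ≤ ∑' i, D * gaugeDiam h (V i) := ENNReal.tsum_le_tsum fun i => hμ k _ (hVρ i)
    _ = D * ∑' i, gaugeDiam h (V i) := ENNReal.tsum_mul_left
    _ ≤ D * w := by gcongr

theorem measure_iInter_eq_zero_of_two_pow_nsmul_le {α : Type*} [MeasurableSpace α] {l : Measure α}
    {K : ℕ → Set α} {b : ℝ≥0∞} (hb : b ≠ ⊤) (hK : ∀ k, (2 ^ k • l) (K k) ≤ b) :
    l (⋂ k, K k) = 0 := by
  by_contra hpos
  obtain ⟨n, hn⟩ := ENNReal.exists_nat_mul_gt hpos hb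
  refine hn.not_ge ?_
  calc (n : ℝ≥0∞) * l (⋂ k, K k) ≤ (2 ^ n : ℕ) * l (K n) := by
        gcongr
        · exact n.lt_two_pow_self.le
        · exact iInter_subset K n
    _ ≤ b := by simpa using hK n

/-- A compact set that can serve as level `k` of the Cantor scheme building an `l`-null compact set
of positive measure: each level loses half of the `l`-mass, so the level `k` mass is renormalized by
`2 ^ k` and kept in `(a, b]`. It is bounded by a multiple `D < 2` of the gauge at scales up to some
`ρ' > ρ`; both strict inequalities leave room for the next level. -/
structure IsCantorStage (h : ℝ≥0 → ℝ≥0∞) (l : Measure Z) (a b : ℝ≥0∞) (ρ : ℝ≥0)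
    (k : ℕ) (K : Set Z) : Prop where
  isCompact : IsCompact K
  lt_measure : a < (2 ^ k • l) K
  measure_le : (2 ^ k • l) K ≤ b
  exists_bound : ∃ D < 2, 1 ≤ D ∧ ∃ ρ' > ρ, h ρ' < ⊤ ∧
    ∀ A, Metric.ediam A ≤ ρ' → (2 ^ k • l) (A ∩ K) ≤ (D : ℝ≥0) * gaugeDiam h A

theorem IsGauge.exists_isCantorStage_zero (hg : IsGauge h) {l : Measure Z}
    (hl : IsLittleOGauge h l) {L : Set Z} (hL : IsCompact L) (hpos : 0 < l L) :
    ∃ a > 0, ∃ ρ > 0, IsCantorStage h l a (l L) ρ 0 L := by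
  obtain ⟨a, ha, haL⟩ := exists_between hpos
  obtain ⟨r, hr, hle⟩ := hl 1
  obtain ⟨e, he, hfin⟩ := hg.exists_pos_lt_top
  have hmin : 0 < min r e := lt_min hr he
  refine ⟨a, ha, min r e / 2, half_pos hmin, hL, by simpa using haL, by simp, 1, one_lt_two, le_rfl,
    min r e, half_lt_self hmin, (hg.mono (min_le_right r e)).trans_lt hfin, fun A hA => ?_⟩
  have hAr : Metric.ediam A ≤ r := hA.trans (by exact_mod_cast min_le_left r e)
  calc (2 ^ 0 • l) (A ∩ L) ≤ l A := by simpa using measure_mono inter_subset_left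
    _ ≤ (1 : ℝ≥0) * gaugeDiam h A := by simpa using hle A hAr

variable {Z : Type*} [MetricSpace Z] [PolishSpace Z] [MeasurableSpace Z] [BorelSpace Z]
  {h : ℝ≥0 → ℝ≥0∞} {l : Measure Z} [IsFiniteMeasure l]

theorem IsCantorStage.exists_succ (hg : IsGauge h) (hl : IsLittleOGauge h l)
    {a b : ℝ≥0∞} {ρ : ℝ≥0} {k : ℕ} {K : Set Z} (hK : IsCantorStage h l a b ρ k K) :
    ∃ K' ⊆ K, IsCantorStage h l a b ρ (k + 1) K' := by
  obtain ⟨D, hD2, hD1, ρ', hρ', hfin, hbound⟩ := hK.exists_bound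
  obtain ⟨D', hDD', hD'2⟩ := exists_between hD2
  obtain ⟨ρ'', hρρ'', hρ''⟩ := exists_between hρ'
  have hdouble : ∀ A, 2 * (2 ^ k • l) A = (2 ^ (k + 1) • l) A := fun A => by
    simp [pow_succ', mul_assoc]
  obtain ⟨K', hK'K, hK', ha, hle, hbound'⟩ :=
    hg.exists_isCompact_halving (hl.nsmul (2 ^ k)) hK.isCompact hDD' (hD1.trans hDD'.le)
      hρ'' hfin hbound hK.lt_measure
  simp only [hdouble] at ha hle hbound'
  refine ⟨K', hK'K, hK', ha, hle.trans hK.measure_le, D', hD'2, hD1.trans hDD'.le, ρ'', hρρ'',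
    (hg.mono hρ''.le).trans_lt hfin, hbound'⟩

theorem IsCantorStage.exists_seq (hg : IsGauge h) (hl : IsLittleOGauge h l)
    {a b : ℝ≥0∞} {ρ : ℝ≥0} {L : Set Z} (hL : IsCantorStage h l a b ρ 0 L) :
    ∃ K : ℕ → Set Z, K 0 = L ∧ Antitone K ∧ ∀ k, IsCantorStage h l a b ρ k (K k) := by
  choose! next hsub hnext using fun k (K : Set Z) (hK : IsCantorStage h l a b ρ k K) =>
    hK.exists_succ hg hl
  let K : ℕ → Set Z := fun k => Nat.rec L next k
  have hK : ∀ k, IsCantorStage h l a b ρ k (K k) := fun k => by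
    induction k with
    | zero => exact hL
    | succ k ih => exact hnext k _ ih
  exact ⟨K, rfl, antitone_nat_of_succ_le fun k => hsub k _ (hK k), hK⟩

theorem IsLittleOGauge.exists_isCompact_null_hausdorffM_pos
    (hl : IsLittleOGauge h l) (hg : IsGauge h) {L : Set Z} (hL : IsCompact L) (hpos : 0 < l L) :
    ∃ F ⊆ L, IsCompact F ∧ l F = 0 ∧ 0 < hausdorffM h F := by
  obtain ⟨a, ha, ρ, hρ, hstage⟩ := hg.exists_isCantorStage_zero hl hL hpos
  obtain ⟨K, rfl, hanti, hK⟩ := hstage.exists_seq hg hl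
  have hbound : ∀ k A, Metric.ediam A ≤ ρ → (2 ^ k • l) (A ∩ K k) ≤ 2 * gaugeDiam h A := by
    intro k A hA
    obtain ⟨D, hD2, -, ρ', hρ', -, hle⟩ := (hK k).exists_bound
    refine (hle A (hA.trans (by exact_mod_cast hρ'.le))).trans ?_
    gcongr
    exact_mod_cast hD2.le
  refine ⟨⋂ k, K k, iInter_subset K 0, hL.of_isClosed_subset (isClosed_iInter fun k =>
    (hK k).isCompact.isClosed) (iInter_subset K 0),
    measure_iInter_eq_zero_of_two_pow_nsmul_le (measure_ne_top l _) fun k => (hK k).measure_le,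
    pos_iff_ne_zero.2 fun hzero => ?_⟩
  obtain ⟨w, hw, hwa⟩ := exists_between (ENNReal.half_pos ha.ne')
  have hcontent : content h (ρ / 2 : ℝ≥0) (⋂ k, K k) < w :=
    (content_le_hausdorffM (by exact_mod_cast half_pos hρ) _).trans_lt (hzero ▸ hw)
  have hle : a ≤ 2 * w := hg.le_mul_of_content_iInter_lt hanti (fun k => (hK k).isCompact)
    (half_lt_self hρ) (fun k => (hK k).lt_measure.le) hbound hcontent
  rw [ENNReal.lt_div_iff_mul_lt (by simp) (by simp), mul_comm] at hwa
  exact hle.not_gt hwa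

end Cantor

section Family

theorem exists_not_countable_pairwise_disjoint {α : Type*} {P : Set α → Prop} (hempty : ¬P ∅)
    (hext : ∀ D : Set (Set α), D.Countable → (∀ K ∈ D, P K) → ∃ K, P K ∧ Disjoint K (⋃₀ D)) :
    ∃ D : Set (Set α), ¬D.Countable ∧ D.Pairwise Disjoint ∧ ∀ K ∈ D, P K := by
  obtain ⟨D, hD⟩ := zorn_subset {D : Set (Set α) | D.Pairwise Disjoint ∧ ∀ K ∈ D, P K}
    fun c hc hchain => ⟨⋃₀ c, ⟨(pairwise_sUnion hchain.directedOn).2 fun s hs => (hc hs).1,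
      fun K ⟨s, hs, hK⟩ => (hc hs).2 K hK⟩, fun s hs => subset_sUnion_of_mem hs⟩
  refine ⟨D, fun hcount => ?_, hD.prop⟩
  obtain ⟨K, hK, hdisj⟩ := hext D hcount hD.prop.2
  have hinsert : (insert K D).Pairwise Disjoint ∧ ∀ K' ∈ insert K D, P K' :=
    ⟨hD.prop.1.insert_of_symm fun K' hK' _ => hdisj.mono_right (subset_sUnion_of_mem hK'),
      forall_mem_insert.2 ⟨hK, hD.prop.2⟩⟩
  have hKD : K ∈ D := hD.le_of_ge hinsert (subset_insert K D) (mem_insert K D)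
  have hKempty : K = ∅ := disjoint_self.1 (hdisj.mono_right (subset_sUnion_of_mem hKD))
  exact hempty (hKempty ▸ hK)

theorem analyticSet_diff {Z : Type*} [TopologicalSpace Z] [PolishSpace Z] [MeasurableSpace Z]
    [BorelSpace Z] {A B : Set Z} (hA : AnalyticSet A) (hB : MeasurableSet B) :
    AnalyticSet (A \ B) := by
  rw [sdiff_eq, inter_eq_iInter]
  exact .iInter (Bool.forall_bool.2 ⟨hB.compl.analyticSet, hA⟩)

theorem isCaratheodory_of_measure_eq_zero {α : Type*} {μ : OuterMeasure α} {A : Set α}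
    (hA : μ A = 0) : μ.IsCaratheodory A := by
  refine (OuterMeasure.isCaratheodory_iff_le' μ).2 fun t => ?_
  rw [measure_mono_null inter_subset_right hA, zero_add]
  exact measure_mono sdiff_subset

theorem sigmaFiniteSet_of_measure_diff_sUnion_eq_zero {α : Type*} {μ : OuterMeasure α} {Y : Set α}
    {D : Set (Set α)} (hD : D.Countable) (hDY : ∀ K ∈ D, K ⊆ Y)
    (hfin : ∀ K ∈ D, μ.IsCaratheodory K ∧ μ K < ⊤) (hnull : μ (Y \ ⋃₀ D) = 0) :
    SigmaFiniteSet μ Y := by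
  have hinsert : ∀ K ∈ insert (Y \ ⋃₀ D) D, μ.IsCaratheodory K ∧ μ K < ⊤ :=
    forall_mem_insert.2 ⟨⟨isCaratheodory_of_measure_eq_zero hnull, by simp [hnull]⟩, hfin⟩
  obtain ⟨f, hf⟩ := (hD.insert (Y \ ⋃₀ D)).exists_eq_range (insert_nonempty _ _)
  refine ⟨f, fun n => hinsert _ (hf ▸ mem_range_self n), ?_⟩
  rw [← sUnion_range, ← hf, sUnion_insert, sdiff_union_of_subset (sUnion_subset hDY)]

variable {Z : Type*} [MetricSpace Z] [PolishSpace Z] [MeasurableSpace Z] [BorelSpace Z]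
  {h : ℝ≥0 → ℝ≥0∞}

theorem EnlargementBound.exists_isCompact_subset_diff_sUnion {C δ₀ : ℝ≥0}
    (hE : EnlargementBound Z h C δ₀) {Y : Set Z} (hY : AnalyticSet Y)
    (hns : ¬SigmaFiniteSet (hausdorffM h) Y) {D : Set (Set Z)} (hD : D.Countable)
    (hDY : ∀ K ∈ D, IsCompact K ∧ K ⊆ Y ∧ hausdorffM h K < ⊤) :
    ∃ K ⊆ Y \ ⋃₀ D, IsCompact K ∧ 0 < hausdorffM h K := by
  have hmeas : ∀ K ∈ D, MeasurableSet K := fun K hK => (hDY K hK).1.measurableSet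
  refine hE.exists_isCompact_of_analyticSet (analyticSet_diff hY (.sUnion hD hmeas))
    (pos_iff_ne_zero.2 fun hnull => hns ?_)
  exact sigmaFiniteSet_of_measure_diff_sUnion_eq_zero hD (fun K hK => (hDY K hK).2.1)
    (fun K hK => ⟨hausdorffM_isCaratheodory (hmeas K hK), (hDY K hK).2.2⟩) hnull

theorem IsLittleOGauge.exists_not_countable {l : Measure Z} [IsFiniteMeasure l]
    (hl : IsLittleOGauge h l) (hg : IsGauge h) {L : Set Z} (hL : IsCompact L) (hpos : 0 < l L) :
    ∃ D : Set (Set Z), ¬D.Countable ∧ D.Pairwise Disjoint ∧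
      ∀ K ∈ D, IsCompact K ∧ K ⊆ L ∧ 0 < hausdorffM h K := by
  let P : Set Z → Prop := fun K => (IsCompact K ∧ K ⊆ L ∧ 0 < hausdorffM h K) ∧ l K = 0
  have hext : ∀ E : Set (Set Z), E.Countable → (∀ K ∈ E, P K) →
      ∃ K, P K ∧ Disjoint K (⋃₀ E) := fun E hE hEL => by
    have hnull : l (⋃₀ E) = 0 := (measure_sUnion_null_iff hE).2 fun K hK => (hEL K hK).2
    have hmeas : MeasurableSet (L \ ⋃₀ E) :=
      hL.measurableSet.diff (.sUnion hE fun K hK => (hEL K hK).1.1.measurableSet)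
    obtain ⟨L', hL'L, hL'closed, hL'pos⟩ := hmeas.exists_lt_isClosed_of_ne_top
      (measure_ne_top l _) (by rwa [measure_sdiff_null hnull])
    obtain ⟨F, hFL', hF, hF0, hFpos⟩ := hl.exists_isCompact_null_hausdorffM_pos hg
      (hL.of_isClosed_subset hL'closed (hL'L.trans sdiff_subset)) hL'pos
    exact ⟨F, ⟨⟨hF, (hFL'.trans hL'L).trans sdiff_subset, hFpos⟩, hF0⟩,
      disjoint_sdiff_left.mono_left (hFL'.trans hL'L)⟩
  obtain ⟨D, hD, hdisj, hDL⟩ := exists_not_countable_pairwise_disjoint (by simp [P]) hext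
  exact ⟨D, hD, hdisj, fun K hK => (hDL K hK).1⟩

end Family

end Howroyd

/-- Corollary of Howroyd's theorem. -/
theorem statement_3 {Z : Type*} [MetricSpace Z] (Y : Set Z) (h : ℝ≥0 → ℝ≥0∞)
    (hH : PropertyHInf Y h) :
    ∃ D : Set (Set Z), ¬ D.Countable ∧ D.Pairwise Disjoint ∧
      ∀ K ∈ D, IsCompact K ∧ K ⊆ Y ∧ 0 < hausdorffM h K := by
  obtain ⟨⟨_, _, hY, hh, hcont, hzero, halt⟩, hns⟩ := hH
  have := UniformSpace.secondCountable_of_separable Z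
  borelize Z
  have hg : Howroyd.IsGauge h := ⟨hh, hcont, hzero⟩
  obtain ⟨C, δ₀, hE⟩ := Howroyd.exists_enlargementBound hg halt
  let P : Set Z → Prop := fun K =>
    IsCompact K ∧ K ⊆ Y ∧ 0 < hausdorffM h K ∧ hausdorffM h K < ⊤
  by_cases hext : ∀ D : Set (Set Z), D.Countable → (∀ K ∈ D, P K) → ∃ K, P K ∧ Disjoint K (⋃₀ D)
  · obtain ⟨D, hD, hdisj, hDP⟩ :=
      Howroyd.exists_not_countable_pairwise_disjoint (by simp [P]) hext
    exact ⟨D, hD, hdisj, fun K hK => ⟨(hDP K hK).1, (hDP K hK).2.1, (hDP K hK).2.2.1⟩⟩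
  push Not at hext
  obtain ⟨D, hD, hDP, hmax⟩ := hext
  obtain ⟨K, hKY, hK, hKpos⟩ := hE.exists_isCompact_subset_diff_sUnion hY hns hD
    fun K hK => ⟨(hDP K hK).1, (hDP K hK).2.1, (hDP K hK).2.2.2⟩
  obtain ⟨F, hFK, hF, hFpos, hFfin⟩ | ⟨L, hLK, hL, l, hlfin, hl, hLpos⟩ :=
    hE.exists_isCompact_finite_or_isLittleOGauge hK hKpos
  · exact absurd (disjoint_sdiff_left.mono_left (hFK.trans hKY))
      (hmax F ⟨hF, (hFK.trans hKY).trans sdiff_subset, hFpos, hFfin⟩)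
  · obtain ⟨E, hEcount, hdisj, hEL⟩ := hl.exists_not_countable hg hL hLpos
    exact ⟨E, hEcount, hdisj, fun K' hK' => ⟨(hEL K' hK').1,
      ((hEL K' hK').2.1.trans (hLK.trans hKY)).trans sdiff_subset, (hEL K' hK').2.2⟩⟩
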